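/- If λ_1 and λ_2 are Dyck paths of order n whose chord posets P_{λ_1} and P_{λ_2} are isomorphic as posets, then the generating functions of their cover-inclusive Dyck tilings by the art statistic coincide: Σ_{T ∈ D(λ_1,*)} q^{art(T)} = Σ_{T ∈ D(λ_2,*)} q^{art(T)}. -/

import Mathlib

open Finset

noncomputable section

/-- A Dyck path of order `n`: a word of `2n` steps (`true` = up-step `(+1,+1)`,
`false` = down-step `(+1,-1)`) from `(-n,0)` to `(n,0)` staying weakly above the x-axis. -/
structure DyckPath (n : ℕ) where
  step : Fin (2 * n) → Bool
  balanced : (Finset.univ.filter fun i => step i = true).card = n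
  nonneg : ∀ k : ℕ, k ≤ 2 * n →
    (Finset.univ.filter fun i : Fin (2 * n) => (i : ℕ) < k ∧ step i = false).card ≤
      (Finset.univ.filter fun i : Fin (2 * n) => (i : ℕ) < k ∧ step i = true).card

namespace DyckPath

/-- Height of the path above column `x` (columns run from `-n` to `n`). -/
def ht {n : ℕ} (P : DyckPath n) (x : ℤ) : ℤ :=
  ((Finset.univ.filter fun i : Fin (2 * n) => ((i : ℕ) : ℤ) < x + n ∧ P.step i = true).card : ℤ) -
    ((Finset.univ.filter fun i : Fin (2 * n) => ((i : ℕ) : ℤ) < x + n ∧ P.step i = false).card : ℤ)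

/-- Height of the path at lattice point number `k`, `0 ≤ k ≤ 2n`
(point `k` lies at column `k - n`). -/
def pt {n : ℕ} (P : DyckPath n) (k : ℕ) : ℤ := P.ht ((k : ℤ) - n)

end DyckPath

/-- `IsChord P p q`: the up-step at (0-indexed) position `p` matches the down-step at
position `q`, forming a chord of `P`. -/
def IsChord {n : ℕ} (P : DyckPath n) (p q : ℕ) : Prop :=
  p < q ∧ q < 2 * n ∧
    (∃ hp : p < 2 * n, P.step ⟨p, hp⟩ = true) ∧
    (∃ hq : q < 2 * n, P.step ⟨q, hq⟩ = false) ∧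
    P.pt (q + 1) = P.pt p ∧
    ∀ m : ℕ, p < m → m ≤ q → P.pt p < P.pt m

/-- A natural labeling of the chord poset of `P`: the chord labeled `i` has its up-step at
(0-indexed) position `l i` and matching down-step at position `r i`; distinct labels name
distinct chords; and if one chord is nested inside another it receives a larger label. -/
structure ChordLabeling {n : ℕ} (P : DyckPath n) where
  l : Fin n → ℕ
  r : Fin n → ℕ
  chord : ∀ i, IsChord P (l i) (r i)
  inj : Function.Injective l
  natural : ∀ i j : Fin n, l j < l i → r i < r j → j < i

/-- The length of the chord labeled `i`: the number of up steps of `P` between and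
including its two endpoints. -/
def chordLen {n : ℕ} {P : DyckPath n} (C : ChordLabeling P) (i : Fin n) : ℕ :=
  (Finset.univ.filter fun m : Fin (2 * n) =>
    C.l i ≤ (m : ℕ) ∧ (m : ℕ) ≤ C.r i ∧ P.step m = true).card

/-- The growth sequence `p_1, …, p_n` associated with a natural chord labeling:
`p i = #{j<i : l j < l i} + #{j<i : r j < l i}`. -/
def seqOf {n : ℕ} {P : DyckPath n} (C : ChordLabeling P) (i : Fin n) : ℕ :=
  (Finset.univ.filter fun j : Fin n => j < i ∧ C.l j < C.l i).card +
    (Finset.univ.filter fun j : Fin n => j < i ∧ C.r j < C.l i).card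

/-- `σ` is the standardization of the word `w` (with distinct letters). -/
def IsStandardization {n : ℕ} (w : Fin n → ℕ) (σ : Equiv.Perm (Fin n)) : Prop :=
  ∀ i j : Fin n, σ i < σ j ↔ w i < w j

/-- `σ ∈ 𝓛(P_λ)`: σ is `L₀ ∘ L⁻¹` for some natural labeling `L` of the chord poset,
equivalently the standardization of the word of left endpoints of a natural labeling. -/
def LinExt {n : ℕ} (P : DyckPath n) (σ : Equiv.Perm (Fin n)) : Prop :=
  ∃ C : ChordLabeling P, IsStandardization C.l σ

/-- Successor index in `Fin n` (used only under the guard `i+1 < n`). -/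
def nextIdx {n : ℕ} (i : Fin n) : Fin n := ⟨((i : ℕ) + 1) % n, Nat.mod_lt _ i.pos⟩

/-- Descent set of a word: positions `i` with `i+1 < n` and `w i > w (i+1)`. -/
def descentFinset {n : ℕ} (w : Fin n → ℕ) : Finset (Fin n) :=
  Finset.univ.filter fun i => (i : ℕ) + 1 < n ∧ w (nextIdx i) < w i

/-- Number of inversions of a word. -/
def wordInv {n : ℕ} (w : Fin n → ℕ) : ℕ :=
  (Finset.univ.filter fun p : Fin n × Fin n => p.1 < p.2 ∧ w p.2 < w p.1).card

/-- The word of values of a permutation. -/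
def permWord {n : ℕ} (σ : Equiv.Perm (Fin n)) : Fin n → ℕ := fun i => (σ i : ℕ)

/-- inv(σ). -/
def permInv {n : ℕ} (σ : Equiv.Perm (Fin n)) : ℕ := wordInv (permWord σ)

/-- des(σ). -/
def permDes {n : ℕ} (σ : Equiv.Perm (Fin n)) : ℕ := (descentFinset (permWord σ)).card

/-- `REM_i(w) = {k > i : w i > w k > w (i+1)}`, the right embraced numbers. -/
def remSet {n : ℕ} (w : Fin n → ℕ) (i : Fin n) : Finset (Fin n) :=
  Finset.univ.filter fun k => i < k ∧ w (nextIdx i) < w k ∧ w k < w i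

/-- desdif(σ) = Σ_{i ∈ DES σ} (σ i − σ (i+1)). -/
def desdif {n : ℕ} (σ : Equiv.Perm (Fin n)) : ℕ :=
  ∑ i ∈ descentFinset (permWord σ), (permWord σ i - permWord σ (nextIdx i))

/-- res(σ) = Σ_{i ∈ DES σ} #{k < i : σ i > σ k > σ (i+1)}. -/
def resStat {n : ℕ} (σ : Equiv.Perm (Fin n)) : ℕ :=
  ∑ i ∈ descentFinset (permWord σ),
    (Finset.univ.filter fun k : Fin n =>
      k < i ∧ permWord σ (nextIdx i) < permWord σ k ∧ permWord σ k < permWord σ i).card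

/-- The Mahonian statistic mad(σ) = desdif(σ) + res(σ). -/
def mad {n : ℕ} (σ : Equiv.Perm (Fin n)) : ℕ := desdif σ + resStat σ

/-- σ avoids the pattern 231. -/
def Avoids231 {n : ℕ} (σ : Equiv.Perm (Fin n)) : Prop :=
  ¬∃ i j k : Fin n, i < j ∧ j < k ∧ σ k < σ i ∧ σ i < σ j

/-- The boxes of the skew shape `lam/mu` (with `mu` weakly above `lam`), each box
recorded by its bottom corner (a lattice point `(x, z)` with `z ≡ x + n (mod 2)`). -/
def skewCells {n : ℕ} (lam mu : DyckPath n) : Finset (ℤ × ℤ) :=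
  ((Finset.Icc (-(n : ℤ)) n) ×ˢ (Finset.Icc (0 : ℤ) n)).filter fun c =>
    lam.ht c.1 ≤ c.2 ∧ c.2 + 2 ≤ mu.ht c.1 ∧ (c.2 - c.1 - n) % 2 = 0

/-- A Dyck tile, recorded by the set of bottom corners of its boxes: these form
a Dyck-path shape, i.e. a ±1-step lattice path whose two ends are lowest. -/
def IsDyckTile (t : Finset (ℤ × ℤ)) : Prop :=
  ∃ (a b : ℤ) (f : ℤ → ℤ), a ≤ b ∧
    (∀ x : ℤ, a ≤ x → x < b → f (x + 1) = f x + 1 ∨ f (x + 1) = f x - 1) ∧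
    f b = f a ∧ (∀ x : ℤ, a ≤ x → x ≤ b → f a ≤ f x) ∧
    t = (Finset.Icc a b).image fun x => (x, f x)

/-- A Dyck tiling of order `n`: a tiling of the skew shape between two Dyck paths of
order `n` by Dyck tiles. -/
structure DyckTiling (n : ℕ) where
  lower : DyckPath n
  upper : DyckPath n
  below : ∀ x : ℤ, lower.ht x ≤ upper.ht x
  tiles : Finset (Finset (ℤ × ℤ))
  isDyck : ∀ t ∈ tiles, IsDyckTile t
  disj : ∀ t ∈ tiles, ∀ u ∈ tiles, t ≠ u → Disjoint t u
  cover : tiles.biUnion id = skewCells lower upper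

namespace DyckTiling

/-- Number of boxes of the skew shape. -/
def area {n : ℕ} (T : DyckTiling n) : ℕ := (skewCells T.lower T.upper).card

/-- Number of tiles. -/
def numTiles {n : ℕ} (T : DyckTiling n) : ℕ := T.tiles.card

/-- art(T) = (area(T) + tiles(T)) / 2. -/
def art {n : ℕ} (T : DyckTiling n) : ℕ := (T.area + T.numTiles) / 2

/-- dis(T): the number of step positions where the lower path steps down while the
upper path steps up. -/
def dis {n : ℕ} (T : DyckTiling n) : ℕ :=
  (Finset.univ.filter fun i : Fin (2 * n) =>
    T.lower.step i = false ∧ T.upper.step i = true).card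

/-- Cover-inclusiveness: whenever a tile has a box strictly above a box of another tile,
its horizontal extent is contained in that of the other tile. -/
def CoverInclusive {n : ℕ} (T : DyckTiling n) : Prop :=
  ∀ t ∈ T.tiles, ∀ u ∈ T.tiles,
    (∃ p ∈ t, ∃ q ∈ u, (p : ℤ × ℤ).1 = (q : ℤ × ℤ).1 ∧ (q : ℤ × ℤ).2 < (p : ℤ × ℤ).2) →
    ∀ p ∈ t, ∃ y : ℤ, ((p : ℤ × ℤ).1, y) ∈ u

end DyckTiling

/-- Height function of the spread at column `s` of a Dyck path. -/
def spreadHt {n : ℕ} (P : DyckPath n) (s x : ℤ) : ℤ :=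
  if x < s then P.ht (x + 1) else if x = s then P.ht s + 1 else P.ht (x - 1)

/-- Spread of a tile at column `s`: points left of `s` move left, points right of `s`
move right, and a point at column `s` is duplicated upward. -/
def spreadTile (s : ℤ) (t : Finset (ℤ × ℤ)) : Finset (ℤ × ℤ) :=
  ((t.filter fun p => p.1 ≤ s).image fun p => (p.1 - 1, p.2)) ∪
    ((t.filter fun p => p.1 = s).image fun p => (p.1, p.2 + 1)) ∪
    ((t.filter fun p => s ≤ p.1).image fun p => (p.1 + 1, p.2))

/-- Spread of a set of tiles at column `s`. -/
def spreadTiles (s : ℤ) (ts : Finset (Finset (ℤ × ℤ))) : Finset (Finset (ℤ × ℤ)) :=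
  ts.image (spreadTile s)

/-- Column `c` is eligible for a tiling with upper-boundary height function `h` and
tile set `ts`: the upper boundary has an up step ending at column `c`, and its point at
column `c` is not the top corner of a one-box tile. -/
def EligibleCol (h : ℤ → ℤ) (ts : Finset (Finset (ℤ × ℤ))) (c : ℤ) : Prop :=
  h c = h (c - 1) + 1 ∧ ({(c, h c - 2)} : Finset (ℤ × ℤ)) ∉ ts

/-- `T'` is the result of the strip-grow map applied to `(T, s)`: spread `T` at `s` and
add a one-box tile on each up step of the (spread) upper boundary starting at a column
`≥ s` (i.e. strictly to the right of column `s`). -/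
def StripGrowRel {n : ℕ} (T : DyckTiling n) (s : ℤ) (T' : DyckTiling (n + 1)) : Prop :=
  (∀ x : ℤ, T'.lower.ht x = spreadHt T.lower s x) ∧
  (∀ x : ℤ, T'.upper.ht x =
    if s ≤ x ∧ spreadHt T.upper s (x + 1) = spreadHt T.upper s x + 1 then
      spreadHt T.upper s x + 2
    else spreadHt T.upper s x) ∧
  T'.tiles = spreadTiles s T.tiles ∪
    ((Finset.Icc s (n : ℤ)).filter fun x =>
        spreadHt T.upper s (x + 1) = spreadHt T.upper s x + 1).image
      (fun x => ({(x, spreadHt T.upper s x)} : Finset (ℤ × ℤ)))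

/-- `T'` is the result of the ribbon-grow map applied to `(T, s)`: spread `T` at `s`,
and if the special column `Q` of the spread tiling is strictly right of `s`, add a
ribbon of one-box tiles at all columns strictly between `s` and `Q`. -/
def RibbonGrowRel {n : ℕ} (T : DyckTiling n) (s : ℤ) (T' : DyckTiling (n + 1)) : Prop :=
  (∀ x : ℤ, T'.lower.ht x = spreadHt T.lower s x) ∧
  ∃ Q : ℤ,
    EligibleCol (spreadHt T.upper s) (spreadTiles s T.tiles) Q ∧
    (∀ c : ℤ, EligibleCol (spreadHt T.upper s) (spreadTiles s T.tiles) c → c ≤ Q) ∧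
    (∀ x : ℤ, T'.upper.ht x =
      if s < x ∧ x < Q then spreadHt T.upper s x + 2 else spreadHt T.upper s x) ∧
    T'.tiles = spreadTiles s T.tiles ∪
      (Finset.Ioo s Q).image (fun x => ({(x, spreadHt T.upper s x)} : Finset (ℤ × ℤ)))

/-- `s` is the special column of `T`: its rightmost eligible column. -/
def SpecialCol {n : ℕ} (T : DyckTiling n) (s : ℤ) : Prop :=
  EligibleCol T.upper.ht T.tiles s ∧ ∀ c : ℤ, EligibleCol T.upper.ht T.tiles c → c ≤ s

/-- In the strip-shrink map applied to `T'` with special column `s`, a one-box tile is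
removed at column `x`: `x` is right of `s` and there is a one-box tile there that is
part of an up step of the upper boundary. -/
def StripRemovedAt {n : ℕ} (T' : DyckTiling n) (s x : ℤ) : Prop :=
  s < x ∧ T'.upper.ht x = T'.upper.ht (x - 1) + 1 ∧
    ({(x, T'.upper.ht x - 2)} : Finset (ℤ × ℤ)) ∈ T'.tiles

instance {n : ℕ} (T' : DyckTiling n) (s x : ℤ) : Decidable (StripRemovedAt T' s x) := by
  unfold StripRemovedAt; infer_instance

/-- `(T, s)` is the result of the strip-shrink map applied to `T'`: `s` is the special
column of `T'`; all one-box tiles right of `s` lying on up steps of the upper boundary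
are removed; and the result is the spread of `T` at `s`. -/
def StripShrinkRel {n : ℕ} (T' : DyckTiling (n + 1)) (T : DyckTiling n) (s : ℤ) : Prop :=
  SpecialCol T' s ∧
  (∀ x : ℤ, spreadHt T.lower s x = T'.lower.ht x) ∧
  (∀ x : ℤ, spreadHt T.upper s x =
    if StripRemovedAt T' s x then T'.upper.ht x - 2 else T'.upper.ht x) ∧
  spreadTiles s T.tiles =
    T'.tiles \ (((Finset.Ioc s ((n : ℤ) + 1)).filter fun x => StripRemovedAt T' s x).image
      fun x => ({(x, T'.upper.ht x - 2)} : Finset (ℤ × ℤ)))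

/-- `(T, s)` is the result of the ribbon-shrink map applied to `T'`: `s` is the special
column of `T'`; the maximal run of topmost one-box tiles in columns `s+1, s+2, …` is
removed; and the result is the spread of `T` at `s`. -/
def RibbonShrinkRel {n : ℕ} (T' : DyckTiling (n + 1)) (T : DyckTiling n) (s : ℤ) : Prop :=
  SpecialCol T' s ∧
  ∃ r : ℤ, s < r ∧
    (∀ x : ℤ, s < x → x < r → ({(x, T'.upper.ht x - 2)} : Finset (ℤ × ℤ)) ∈ T'.tiles) ∧
    ({(r, T'.upper.ht r - 2)} : Finset (ℤ × ℤ)) ∉ T'.tiles ∧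
    (∀ x : ℤ, spreadHt T.lower s x = T'.lower.ht x) ∧
    (∀ x : ℤ, spreadHt T.upper s x =
      if s < x ∧ x < r then T'.upper.ht x - 2 else T'.upper.ht x) ∧
    spreadTiles s T.tiles =
      T'.tiles \ ((Finset.Ioo s r).image fun x => ({(x, T'.upper.ht x - 2)} : Finset (ℤ × ℤ)))

/-- `IsDTS n p T`: `T` is the Dyck tiling `DTS(p_1, …, p_n)` (indices 0-based, so the
growth column for step `i` is `p i - i`). -/
inductive IsDTS : (n : ℕ) → (Fin n → ℕ) → DyckTiling n → Prop where
  | nil (p : Fin 0 → ℕ) (T : DyckTiling 0) : IsDTS 0 p T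
  | cons (n : ℕ) (p : Fin (n + 1) → ℕ) (T : DyckTiling n) (T' : DyckTiling (n + 1)) :
      IsDTS n (fun i => p i.castSucc) T →
      StripGrowRel T ((p (Fin.last n) : ℤ) - n) T' → IsDTS (n + 1) p T'

/-- `IsDTR n p T`: `T` is the Dyck tiling `DTR(p_1, …, p_n)`. -/
inductive IsDTR : (n : ℕ) → (Fin n → ℕ) → DyckTiling n → Prop where
  | nil (p : Fin 0 → ℕ) (T : DyckTiling 0) : IsDTR 0 p T
  | cons (n : ℕ) (p : Fin (n + 1) → ℕ) (T : DyckTiling n) (T' : DyckTiling (n + 1)) :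
      IsDTR n (fun i => p i.castSucc) T →
      RibbonGrowRel T ((p (Fin.last n) : ℤ) - n) T' → IsDTR (n + 1) p T'

/-- `T = DTS(λ, σ)`. -/
def IsDTSof {n : ℕ} (lam : DyckPath n) (σ : Equiv.Perm (Fin n)) (T : DyckTiling n) : Prop :=
  ∃ C : ChordLabeling lam, IsStandardization C.l σ ∧ IsDTS n (seqOf C) T

/-- `T = DTR(λ, σ)`. -/
def IsDTRof {n : ℕ} (lam : DyckPath n) (σ : Equiv.Perm (Fin n)) (T : DyckTiling n) : Prop :=
  ∃ C : ChordLabeling lam, IsStandardization C.l σ ∧ IsDTR n (seqOf C) T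

/-- Increment `a` if it exceeds `p`. -/
def bump (p a : ℕ) : ℕ := if p < a then a + 1 else a

/-- The perfect matching `match(p_1, …, p_n)` of `{1, …, 2n}`. -/
def matchSeq : (n : ℕ) → (Fin n → ℕ) → Finset (ℕ × ℕ)
  | 0, _ => ∅
  | n + 1, p =>
    ((matchSeq n fun i => p i.castSucc).image fun q =>
      (bump (p (Fin.last n)) q.1, bump (p (Fin.last n)) q.2)) ∪
      {(p (Fin.last n) + 1, 2 * (n + 1))}

/-- The number of nestings of a matching: pairs `(a,b)`, `(c,d)` with `c < a < b < d`. -/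
def nestings (M : Finset (ℕ × ℕ)) : ℕ :=
  ((M ×ˢ M).filter fun q => q.2.1 < q.1.1 ∧ q.1.1 < q.1.2 ∧ q.1.2 < q.2.2).card

/-- `w` is the min-word of `M`: the list of the smaller elements of the pairs of `M`,
sorted by the larger elements. -/
def IsMinWord (n : ℕ) (M : Finset (ℕ × ℕ)) (w : Fin n → ℕ) : Prop :=
  ∃ b : Fin n → ℕ, StrictMono b ∧ (∀ i, w i < b i) ∧
    M = Finset.univ.image fun i => (w i, b i)

/-- The number of tiles of `T` containing boxes over both endpoint columns of the
chord with endpoints at step positions `p < q`. -/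
def chordTileCount {n : ℕ} (T : DyckTiling n) (p q : ℕ) : ℕ :=
  (T.tiles.filter fun t =>
    (∃ c ∈ t, (c : ℤ × ℤ).1 = (p : ℤ) + 1 - n) ∧ (∃ c ∈ t, (c : ℤ × ℤ).1 = (q : ℤ) - n)).card

/-- A Dyck tableau of order `n` over the zigzag path `Z` of order `n+1`: a skew shape
`Z/μ` with `n` dots, one in each column of the skew shape through a valley of `Z`. -/
structure DyckTableau (n : ℕ) (Z : DyckPath (n + 1)) where
  upper : DyckPath (n + 1)
  below : ∀ x : ℤ, Z.ht x ≤ upper.ht x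
  dots : Finset (ℤ × ℤ)
  sub : dots ⊆ skewCells Z upper
  card_dots : dots.card = n
  valley : ∀ x : ℤ, Z.ht (x - 1) = Z.ht x + 1 → Z.ht (x + 1) = Z.ht x + 1 →
    (dots.filter fun c => c.1 = x).card = 1

/-- The `q`-integer `[m]_q = 1 + q + ⋯ + q^(m-1)` as a polynomial. -/
def qint (m : ℕ) : Polynomial ℤ := ∑ i ∈ Finset.range m, Polynomial.X ^ i

/-- The `q`-factorial `[n]_q!`. -/
def qfact (n : ℕ) : Polynomial ℤ := ∏ i ∈ Finset.range n, qint (i + 1)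

/-!
Over the lower path `λ`, every tile of a cover-inclusive Dyck tiling is a translate of a piece of
`λ`. The tiling is therefore determined by the number of cells above each point of `λ` and the
number of tiles crossing each step of `λ`. The labels that occur are those for which the two steps
of a chord carry equal labels, at most the labels of all points and steps inside the chord, and for
which the labels of the two points of a step differ by at most one, the smaller belonging to the
point inside the chord.

Summing `q ^ art` over these labels by recursion on the forest of chords, with the label of the
first point as input and the label of the last point as output, gives a product of operators on
sequences. Multiplied by the `q`-lengths of the chords, this operator depends on the number of
chords alone, and it yields
`(∏ [length of the chord]_q) * ∑ q ^ art = [n]_q!`.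
The poset of chords determines their lengths.
-/

open Polynomial

lemma qint_zero : qint 0 = 0 := sum_range_zero _

lemma qint_one : qint 1 = 1 := by simp [qint]

lemma qint_succ (m : ℕ) : qint (m + 1) = qint m + X ^ m := sum_range_succ _ m

lemma X_pow_eq_one_add_mul_qint (m : ℕ) : (X : ℤ[X]) ^ m = 1 + (X - 1) * qint m := by
  rw [qint, mul_geom_sum]
  ring

lemma qint_succ_eq_one_add (m : ℕ) : qint (m + 1) = 1 + X * qint m := by
  rw [qint_succ, X_pow_eq_one_add_mul_qint]
  ring

lemma qint_ne_zero {m : ℕ} (hm : m ≠ 0) : qint m ≠ 0 := by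
  intro h
  have : ((m : ℕ) : ℤ) = 0 := by simpa [qint, eval_finsetSum] using congrArg (eval 1) h
  exact hm (mod_cast this)

namespace SeqOp

section Shift

variable {R : Type*} [CommRing R]

/-- The right shift of sequences, `(φ₀, φ₁, …) ↦ (0, φ₀, φ₁, …)`. -/
def shiftR : Module.End R (ℕ → R) where
  toFun φ i := Nat.casesOn i 0 φ
  map_add' φ ψ := by ext1 i; cases i <;> simp
  map_smul' c φ := by ext1 i; cases i <;> simp

/-- The left shift of sequences, `(φ₀, φ₁, …) ↦ (φ₁, φ₂, …)`. -/
def shiftL : Module.End R (ℕ → R) where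
  toFun φ i := φ (i + 1)
  map_add' _ _ := rfl
  map_smul' _ _ := rfl

@[simp] lemma shiftR_apply_zero (φ : ℕ → R) : shiftR φ 0 = 0 := rfl
@[simp] lemma shiftR_apply_succ (φ : ℕ → R) (i : ℕ) : shiftR φ (i + 1) = φ i := rfl
@[simp] lemma shiftL_apply (φ : ℕ → R) (i : ℕ) : shiftL φ i = φ (i + 1) := rfl

lemma shiftL_pow_apply (k : ℕ) (φ : ℕ → R) (i : ℕ) : (shiftL ^ k) φ i = φ (i + k) := by
  induction k generalizing φ with
  | zero => rfl
  | succ k ih =>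
    rw [pow_succ, Module.End.mul_apply, ih, shiftL_apply]
    rfl

lemma one_add_shiftL_apply (φ : ℕ → R) (i : ℕ) :
    (1 + shiftL) φ i = ∑ j ∈ Icc i (i + 1), φ j := by
  simp [sum_Icc_succ_top]

lemma one_add_shiftR_apply (φ : ℕ → R) (i : ℕ) :
    (1 + shiftR) φ i = ∑ j ∈ Icc (i - 1) i, φ j := by
  cases i <;> simp [sum_Icc_succ_top, add_comm]

/-- The operator `∑ₖ cᵏ • shiftRᵏ * B * shiftLᵏ`, a finite sum in each entry. -/
def shiftSeries (c : R) (B : Module.End R (ℕ → R)) : Module.End R (ℕ → R) where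
  toFun φ i := ∑ k ∈ range (i + 1), c ^ k * B ((shiftL ^ k) φ) (i - k)
  map_add' φ ψ := by ext1 i; simp [mul_add, sum_add_distrib]
  map_smul' a φ := by ext1 i; simp [mul_sum, mul_left_comm]

lemma shiftSeries_apply (c : R) (B : Module.End R (ℕ → R)) (φ : ℕ → R) (i : ℕ) :
    shiftSeries c B φ i = ∑ k ∈ range (i + 1), c ^ k * B ((shiftL ^ k) φ) (i - k) := rfl

lemma shiftSeries_eq (c : R) (B : Module.End R (ℕ → R)) :
    shiftSeries c B = c • (shiftR * shiftSeries c B * shiftL) + B := by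
  ext1 φ
  funext i
  rcases i with - | i
  · simp [shiftSeries_apply]
  · simp [shiftSeries_apply, sum_range_succ' _ (i + 1), mul_sum, pow_succ, mul_left_comm,
      mul_assoc]

lemma eq_shiftSeries {c : R} {A B : Module.End R (ℕ → R)}
    (h : A = c • (shiftR * A * shiftL) + B) : A = shiftSeries c B := by
  have apply_eq : ∀ i φ, A φ i = shiftSeries c B φ i := by
    intro i
    induction i with
    | zero =>
      intro φ
      rw [h, shiftSeries_eq]
      simp
    | succ i ih =>
      intro φ
      rw [h, shiftSeries_eq]
      simp [ih]
  ext1 φ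
  exact funext fun i => apply_eq i φ

lemma smul_shiftSeries (a c : R) (B : Module.End R (ℕ → R)) :
    a • shiftSeries c B = shiftSeries c (a • B) := by
  refine eq_shiftSeries ?_
  conv_lhs => rw [shiftSeries_eq]
  rw [smul_add, smul_comm, mul_smul_comm, smul_mul_assoc]

end Shift

/-- Multiplication of the `i`-th entry by `q ^ i`. -/
def scale : Module.End ℤ[X] (ℕ → ℤ[X]) where
  toFun φ i := X ^ i * φ i
  map_add' φ ψ := by ext1 i; simp [mul_add]
  map_smul' c φ := by ext1 i; simp [mul_left_comm]

/-- Multiplication of the `i`-th entry by `[i + 1]_q`. -/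
def qScale : Module.End ℤ[X] (ℕ → ℤ[X]) where
  toFun φ i := qint (i + 1) * φ i
  map_add' φ ψ := by ext1 i; simp [mul_add]
  map_smul' c φ := by ext1 i; simp [mul_left_comm]

@[simp] lemma scale_apply (φ : ℕ → ℤ[X]) (i : ℕ) : scale φ i = X ^ i * φ i := rfl
@[simp] lemma qScale_apply (φ : ℕ → ℤ[X]) (i : ℕ) : qScale φ i = qint (i + 1) * φ i := rfl

/-- The contribution of the up-step of a chord to the generating function of tilings. -/
def create : Module.End ℤ[X] (ℕ → ℤ[X]) := (1 + shiftR) * scale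

/-- The contribution of the down-step of a chord to the generating function of tilings. -/
def annihilate : Module.End ℤ[X] (ℕ → ℤ[X]) := (1 + shiftL) * scale

/-- The tridiagonal operator by which adding a chord multiplies the generating function of
tilings, up to `q`-hook lengths. -/
def tridiag : Module.End ℤ[X] (ℕ → ℤ[X]) := (1 + shiftR) * qScale * annihilate

lemma shiftL_mul_scale : shiftL * scale = (X : ℤ[X]) • (scale * shiftL) := by
  ext1 φ
  funext i
  simp [pow_succ', mul_assoc]

lemma shiftSeries_mul_scale (c : ℤ[X]) (B : Module.End ℤ[X] (ℕ → ℤ[X])) :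
    shiftSeries c B * scale = shiftSeries (c * X) (B * scale) := by
  refine eq_shiftSeries ?_
  conv_lhs => rw [shiftSeries_eq]
  simp only [add_mul, smul_mul_assoc, mul_assoc, shiftL_mul_scale, mul_smul_comm, smul_smul]

@[simp] lemma create_apply_zero (φ : ℕ → ℤ[X]) : create φ 0 = φ 0 := by simp [create]

@[simp] lemma create_apply_succ (φ : ℕ → ℤ[X]) (i : ℕ) :
    create φ (i + 1) = X ^ (i + 1) * φ (i + 1) + X ^ i * φ i := by
  simp [create]

@[simp] lemma annihilate_apply (φ : ℕ → ℤ[X]) (i : ℕ) :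
    annihilate φ i = X ^ i * φ i + X ^ (i + 1) * φ (i + 1) := by
  simp [annihilate]

@[simp] lemma tridiag_apply_zero (φ : ℕ → ℤ[X]) : tridiag φ 0 = φ 0 + X * φ 1 := by
  simp [tridiag, qint_one]

@[simp] lemma tridiag_apply_succ (φ : ℕ → ℤ[X]) (i : ℕ) :
    tridiag φ (i + 1) = qint (i + 2) * annihilate φ (i + 1) + qint (i + 1) * annihilate φ i := by
  simp [tridiag]

lemma shiftL_mul_tridiag :
    shiftL * tridiag = (X : ℤ[X]) • (tridiag * shiftL) + annihilate * annihilate := by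
  ext1 φ
  funext i
  rcases i with - | i
  · simp only [Module.End.mul_apply, LinearMap.add_apply, LinearMap.smul_apply, Pi.add_apply,
      Pi.smul_apply, smul_eq_mul, shiftL_apply, tridiag_apply_zero, tridiag_apply_succ,
      annihilate_apply, qint_succ, qint_zero]
    ring
  · simp only [Module.End.mul_apply, LinearMap.add_apply, LinearMap.smul_apply, Pi.add_apply,
      Pi.smul_apply, smul_eq_mul, shiftL_apply, tridiag_apply_succ, annihilate_apply, qint_succ,
      pow_succ, X_pow_eq_one_add_mul_qint i]
    ring

lemma annihilate_mul_tridiag :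
    annihilate * tridiag = (X : ℤ[X]) • (tridiag * annihilate) + annihilate * annihilate := by
  ext1 φ
  funext i
  rcases i with - | i
  · simp only [Module.End.mul_apply, LinearMap.add_apply, LinearMap.smul_apply, Pi.add_apply,
      Pi.smul_apply, smul_eq_mul, tridiag_apply_zero, tridiag_apply_succ, annihilate_apply,
      qint_succ, qint_zero]
    ring
  · simp only [Module.End.mul_apply, LinearMap.add_apply, LinearMap.smul_apply, Pi.add_apply,
      Pi.smul_apply, smul_eq_mul, tridiag_apply_succ, annihilate_apply, qint_succ, pow_succ,
      X_pow_eq_one_add_mul_qint i]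
    ring

lemma one_add_shiftR_mul_annihilate_sub_shiftL :
    1 + shiftR * (annihilate - shiftL) = create := by
  ext1 φ
  funext i
  rcases i with - | i
  · simp
  · simp [add_comm]

lemma tridiag_eq :
    tridiag = (X : ℤ[X]) • (shiftR * tridiag * shiftL) + create * annihilate := by
  ext1 φ
  funext i
  rcases i with - | - | i
  · simp
  · simp only [LinearMap.add_apply, LinearMap.smul_apply, Module.End.mul_apply, Pi.add_apply,
      Pi.smul_apply, smul_eq_mul, shiftR_apply_succ, shiftL_apply, tridiag_apply_zero,
      tridiag_apply_succ, create_apply_succ, annihilate_apply, qint_succ, qint_zero]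
    ring
  · simp only [LinearMap.add_apply, LinearMap.smul_apply, Module.End.mul_apply, Pi.add_apply,
      Pi.smul_apply, smul_eq_mul, shiftR_apply_succ, shiftL_apply, tridiag_apply_succ,
      create_apply_succ, annihilate_apply, qint_succ, pow_succ, X_pow_eq_one_add_mul_qint i]
    ring

lemma annihilate_sub_shiftL_mul_tridiag :
    (annihilate - shiftL) * tridiag = (X : ℤ[X]) • (tridiag * (annihilate - shiftL)) := by
  rw [sub_mul, annihilate_mul_tridiag, shiftL_mul_tridiag, mul_sub, smul_sub]
  abel

lemma create_mul_tridiag_pow (m : ℕ) :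
    create * tridiag ^ m =
      tridiag ^ m + (X ^ m : ℤ[X]) • (shiftR * tridiag ^ m * (annihilate - shiftL)) := by
  induction m with
  | zero => simp [one_add_shiftR_mul_annihilate_sub_shiftL]
  | succ m ih =>
    rw [pow_succ, ← mul_assoc, ih, add_mul, smul_mul_assoc, mul_assoc _ _ tridiag,
      annihilate_sub_shiftL_mul_tridiag, mul_smul_comm, smul_smul]
    simp only [mul_assoc, pow_succ]

lemma tridiag_pow_succ (m : ℕ) :
    tridiag ^ (m + 1) = (X ^ (m + 1) : ℤ[X]) • (shiftR * tridiag ^ (m + 1) * shiftL) +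
      qint (m + 1) • (create * tridiag ^ m * annihilate) := by
  induction m with
  | zero => simpa [qint_one] using tridiag_eq
  | succ m ih =>
    set c : ℤ[X] := X ^ (m + 1)
    set S := shiftR * tridiag ^ (m + 1)
    set A := annihilate
    have create_eq : create * tridiag ^ (m + 1) = tridiag ^ (m + 1) + c • (S * (A - shiftL)) :=
      create_mul_tridiag_pow (m + 1)
    have smul_eq : qint (m + 1) • (create * tridiag ^ m * A) =
        create * tridiag ^ (m + 1) - c • (S * A) := by
      rw [create_eq, mul_sub, smul_sub, ← sub_eq_iff_eq_add'.mpr ih]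
      abel
    calc tridiag ^ (m + 2)
        = c • (S * (shiftL * tridiag)) +
            qint (m + 1) • (create * tridiag ^ m * (A * tridiag)) := by
          conv_lhs => rw [pow_succ, ih]
          simp only [add_mul, smul_mul_assoc, mul_assoc]
      _ = (c * X) • (S * tridiag * shiftL) + c • (S * A * A) +
            (qint (m + 1) * X) • (create * tridiag ^ (m + 1) * A) +
            (qint (m + 1) • (create * tridiag ^ m * A)) * A := by
          rw [shiftL_mul_tridiag, annihilate_mul_tridiag]
          simp only [mul_add, smul_add, mul_smul_comm, smul_smul, smul_mul_assoc, mul_assoc,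
            pow_succ]
          abel
      _ = (c * X) • (S * tridiag * shiftL) +
            (qint (m + 1) * X + 1) • (create * tridiag ^ (m + 1) * A) := by
          rw [smul_eq, sub_mul, smul_mul_assoc, add_smul, one_smul]
          abel
      _ = (X ^ (m + 2) : ℤ[X]) • (shiftR * tridiag ^ (m + 2) * shiftL) +
            qint (m + 2) • (create * tridiag ^ (m + 1) * A) := by
          rw [qint_succ_eq_one_add (m + 1), add_comm 1, mul_comm X, mul_assoc shiftR, ← pow_succ,
            ← pow_succ]

lemma smul_shiftSeries_mul_scale (m : ℕ) :
    qint (m + 1) • (shiftSeries (X ^ m) ((1 + shiftR) * (scale * tridiag ^ m) * (1 + shiftL)) *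
      scale) = tridiag ^ (m + 1) := by
  rw [shiftSeries_mul_scale, ← pow_succ, smul_shiftSeries]
  refine (eq_shiftSeries ?_).symm
  rw [← mul_assoc, mul_assoc _ (1 + shiftL) scale]
  exact tridiag_pow_succ m

lemma tridiag_pow_single_apply_zero (m : ℕ) : (tridiag ^ m) (Pi.single 0 1) 0 = qfact m := by
  have annihilate_single : annihilate (Pi.single 0 1) = Pi.single 0 1 := by
    funext i
    rcases i with - | i <;> simp
  induction m with
  | zero => simp [qfact]
  | succ m ih =>
    rw [tridiag_pow_succ]
    simp [annihilate_single, ih, qfact, prod_range_succ, mul_comm]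

end SeqOp

/-- Plane forests; `cons a r` is the tree whose root carries the forest `a`, followed by the
forest `r`. They encode Dyck words by `U · a · D · r`. -/
inductive ChordForest where
  | nil : ChordForest
  | cons (a r : ChordForest) : ChordForest

namespace ChordForest

open SeqOp

/-- The number of vertices of a forest. -/
def size : ChordForest → ℕ
  | nil => 0
  | cons a r => a.size + 1 + r.size

/-- The product of the `q`-hook lengths of a forest. -/
def hookProd : ChordForest → ℤ[X]
  | nil => 1
  | cons a r => qint (a.size + 1) * a.hookProd * r.hookProd

/-- Labelings of the lattice points (`t`) and the chords (`k`) of the Dyck word of a forest by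
natural numbers; in a tiling, `t` counts the tiles over a point and `k` the tiles spanning a
chord. -/
inductive Cfg : ChordForest → Type where
  | point (t : ℕ) : Cfg nil
  | node {a r : ChordForest} (t k : ℕ) (ca : Cfg a) (cr : Cfg r) : Cfg (cons a r)

/-- The label of the first point. -/
def first : {f : ChordForest} → Cfg f → ℕ
  | _, .point t => t
  | _, .node t _ _ _ => t

/-- The label of the last point. -/
def last : {f : ChordForest} → Cfg f → ℕ
  | _, .point t => t
  | _, .node _ _ _ cr => last cr

/-- The compatibility conditions between the labels. The labels inside a chord are relative to
the label `k` of the chord, and at most one tile begins or ends at each step. -/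
def Valid : {f : ChordForest} → Cfg f → Prop
  | _, .point _ => True
  | _, .node t k ca cr =>
      (first ca + k ≤ t ∧ t ≤ first ca + k + 1) ∧
      (last ca + k ≤ first cr ∧ first cr ≤ last ca + k + 1) ∧ Valid ca ∧ Valid cr

/-- The weight of a configuration, which is the `art` statistic of the corresponding tiling: the
number of cells minus half the number of times a tile crosses a step. The label `k` of a chord
counts for `2 * a.size + 1` points and `2 * a.size + 2` steps, whence the term `k * a.size`. -/
def weight : {f : ChordForest} → Cfg f → ℕ
  | _, .point t => t
  | _, .node (a := a) t k ca cr => t + k * a.size + weight ca + weight cr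

@[simp] lemma first_node {a r : ChordForest} (t k : ℕ) (ca : Cfg a) (cr : Cfg r) :
    first (.node t k ca cr) = t := rfl

@[simp] lemma last_node {a r : ChordForest} (t k : ℕ) (ca : Cfg a) (cr : Cfg r) :
    last (.node t k ca cr) = last cr := rfl

open Classical in
/-- The valid configurations with given first label. -/
def cfgs : (f : ChordForest) → ℕ → Finset (Cfg f)
  | nil, i => {.point i}
  | cons a r, i =>
    ((range (i + 1)).sigma fun k => (Icc (i - k - 1) (i - k)).sigma fun j =>
      (cfgs a j).sigma fun ca => (Icc (last ca + k) (last ca + k + 1)).sigma fun l =>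
        cfgs r l).image fun s => .node i s.1 s.2.2.1 s.2.2.2.2

lemma mem_cfgs {f : ChordForest} {i : ℕ} {c : Cfg f} : c ∈ cfgs f i ↔ Valid c ∧ first c = i := by
  induction f generalizing i with
  | nil =>
    cases c
    simp [cfgs, Valid, first]
  | cons a r iha ihr =>
    obtain - | ⟨t, k, ca, cr⟩ := c
    simp only [cfgs, mem_image, mem_sigma, Finset.mem_range, Finset.mem_Icc, iha, ihr, Valid,
      first_node]
    constructor
    · rintro ⟨⟨k', j, ca', l, cr'⟩, ⟨hk, hj, ⟨hca, hfirst⟩, hl, hcr, hlast⟩, heq⟩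
      simp only [Cfg.node.injEq] at heq hk hj hca hfirst hl hcr hlast
      obtain ⟨rfl, rfl, rfl, rfl⟩ := heq
      exact ⟨⟨by omega, by omega, hca, hcr⟩, rfl⟩
    · rintro ⟨⟨hfirst, hlast, hca, hcr⟩, rfl⟩
      exact ⟨⟨k, first ca, ca, first cr, cr⟩, by dsimp only; exact
        ⟨by omega, by omega, ⟨hca, rfl⟩, hlast, hcr, rfl⟩, rfl⟩

lemma sum_cfgs_cons (a r : ChordForest) (i : ℕ) (g : Cfg (cons a r) → ℤ[X]) :
    ∑ c ∈ cfgs (cons a r) i, g c =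
      ∑ k ∈ range (i + 1), ∑ j ∈ Icc (i - k - 1) (i - k), ∑ ca ∈ cfgs a j,
        ∑ l ∈ Icc (last ca + k) (last ca + k + 1), ∑ cr ∈ cfgs r l, g (.node i k ca cr) := by
  classical
  rw [cfgs, sum_image]
  · simp only [sum_sigma]
  · rintro ⟨k, j, ca, l, cr⟩ h ⟨k', j', ca', l', cr'⟩ h' heq
    simp only [coe_sigma, Set.mem_sigma_iff, Finset.mem_coe, mem_cfgs] at h h'
    simp only [Cfg.node.injEq] at heq
    obtain ⟨-, rfl, rfl, rfl⟩ := heq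
    obtain ⟨-, -, ⟨-, rfl⟩, -, -, rfl⟩ := h
    obtain ⟨-, -, ⟨-, rfl⟩, -, -, rfl⟩ := h'
    rfl

/-- The generating function of configurations by weight, as an operator: its matrix entry at
`(i, j)` sums over the configurations with first label `i` and last label `j`. -/
def transfer (f : ChordForest) : Module.End ℤ[X] (ℕ → ℤ[X]) where
  toFun φ i := ∑ c ∈ cfgs f i, X ^ weight c * φ (last c)
  map_add' φ ψ := by ext1 i; simp [mul_add, sum_add_distrib]
  map_smul' a φ := by ext1 i; simp [mul_sum, mul_left_comm]

lemma transfer_apply (f : ChordForest) (φ : ℕ → ℤ[X]) (i : ℕ) :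
    transfer f φ i = ∑ c ∈ cfgs f i, X ^ weight c * φ (last c) := rfl

lemma transfer_nil : transfer nil = scale := by
  ext1 φ
  funext i
  simp [transfer_apply, cfgs, weight, last]

lemma transfer_cons (a r : ChordForest) :
    transfer (cons a r) =
      scale * shiftSeries (X ^ a.size) ((1 + shiftR) * transfer a * (1 + shiftL)) *
        transfer r := by
  ext1 φ
  funext i
  simp only [Module.End.mul_apply, scale_apply, shiftSeries_apply, one_add_shiftR_apply,
    transfer_apply, one_add_shiftL_apply, shiftL_pow_apply, sum_cfgs_cons, mul_sum]
  refine sum_congr rfl fun k _ => sum_congr rfl fun j _ => sum_congr rfl fun ca _ => ?_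
  rw [add_right_comm, ← map_add_right_Icc, sum_map]
  refine sum_congr rfl fun l _ => sum_congr rfl fun cr _ => ?_
  simp only [weight, last_node]
  ring

theorem hookProd_smul_transfer (f : ChordForest) :
    f.hookProd • transfer f = scale * tridiag ^ f.size := by
  induction f with
  | nil => simp [hookProd, size, transfer_nil]
  | cons a r iha ihr =>
    have chord_eq : (a.hookProd • shiftSeries (X ^ a.size)
        ((1 + shiftR) * transfer a * (1 + shiftL))) =
        shiftSeries (X ^ a.size)
          ((1 + shiftR) * (scale * tridiag ^ a.size) * (1 + shiftL)) := by
      rw [smul_shiftSeries, ← iha, mul_smul_comm, smul_mul_assoc]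
    calc (cons a r).hookProd • transfer (cons a r)
        = qint (a.size + 1) • (scale * (a.hookProd • shiftSeries (X ^ a.size)
            ((1 + shiftR) * transfer a * (1 + shiftL))) * (r.hookProd • transfer r)) := by
          simp only [transfer_cons, hookProd, mul_smul_comm, smul_mul_assoc, smul_smul]
          ring_nf
      _ = scale * (qint (a.size + 1) • (shiftSeries (X ^ a.size)
            ((1 + shiftR) * (scale * tridiag ^ a.size) * (1 + shiftL)) * scale)) *
            tridiag ^ r.size := by
          rw [chord_eq, ihr]
          simp only [mul_smul_comm, smul_mul_assoc, mul_assoc]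
      _ = scale * tridiag ^ (cons a r).size := by
          rw [smul_shiftSeries_mul_scale, mul_assoc, ← pow_add, size]

theorem hookProd_mul_sum_cfgs (f : ChordForest) :
    f.hookProd * ∑ c ∈ cfgs f 0 with last c = 0, X ^ weight c = qfact f.size := by
  have h := congrFun (LinearMap.congr_fun (hookProd_smul_transfer f) (Pi.single 0 1)) 0
  simpa [transfer_apply, Pi.single_apply, sum_filter, tridiag_pow_single_apply_zero] using h

end ChordForest

namespace ChordForest

/-! ### Forests placed on the line -/

/-- The column in which the word of the forest ends when it starts in column `o`. -/
def finish (f : ChordForest) (o : ℤ) : ℤ := o + 2 * f.size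

lemma finish_nil (o : ℤ) : nil.finish o = o := by simp [finish, size]

lemma finish_cons (a r : ChordForest) (o : ℤ) :
    (cons a r).finish o = r.finish (a.finish (o + 1) + 1) := by
  simp only [finish, size, Nat.cast_add, Nat.cast_one]
  ring

lemma le_finish (f : ChordForest) (o : ℤ) : o ≤ f.finish o := by
  unfold finish
  omega

/-- The columns of the lattice points of the word of the forest. -/
def points (f : ChordForest) (o : ℤ) : Finset ℤ := Icc o (f.finish o)

/-- The columns in which the steps of the word of the forest start; they stand for the steps. -/
def steps (f : ChordForest) (o : ℤ) : Finset ℤ := Ico o (f.finish o)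

lemma mem_points {f : ChordForest} {o x : ℤ} : x ∈ f.points o ↔ o ≤ x ∧ x ≤ f.finish o :=
  Finset.mem_Icc

lemma mem_steps {f : ChordForest} {o x : ℤ} : x ∈ f.steps o ↔ o ≤ x ∧ x < f.finish o :=
  Finset.mem_Ico

lemma points_nil (o : ℤ) : nil.points o = {o} := by simp [points, finish_nil]

lemma steps_nil (o : ℤ) : nil.steps o = ∅ := by simp [steps, finish_nil]

lemma mem_points_cons {a r : ChordForest} {o x : ℤ} :
    x ∈ (cons a r).points o ↔
      x = o ∨ x ∈ a.points (o + 1) ∨ x ∈ r.points (a.finish (o + 1) + 1) := by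
  have ha := a.le_finish (o + 1)
  have hr := r.le_finish (a.finish (o + 1) + 1)
  simp only [mem_points, finish_cons]
  omega

lemma mem_steps_cons {a r : ChordForest} {o x : ℤ} :
    x ∈ (cons a r).steps o ↔ x = o ∨ x = a.finish (o + 1) ∨ x ∈ a.steps (o + 1) ∨
      x ∈ r.steps (a.finish (o + 1) + 1) := by
  have ha := a.le_finish (o + 1)
  have hr := r.le_finish (a.finish (o + 1) + 1)
  simp only [mem_steps, finish_cons]
  omega

lemma sum_points_cons (a r : ChordForest) (o : ℤ) (g : ℤ → ℕ) :
    ∑ x ∈ (cons a r).points o, g x =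
      g o + (∑ x ∈ a.points (o + 1), g x + ∑ x ∈ r.points (a.finish (o + 1) + 1), g x) := by
  have points_cons : (cons a r).points o =
      insert o (a.points (o + 1) ∪ r.points (a.finish (o + 1) + 1)) := by
    ext x
    simp only [mem_insert, mem_union, mem_points_cons]
  have ha := a.le_finish (o + 1)
  rw [points_cons, sum_insert, sum_union]
  · refine disjoint_left.2 fun x hx hx' => ?_
    rw [mem_points] at hx hx'
    omega
  · simp only [mem_union, mem_points]
    omega

lemma sum_steps_cons (a r : ChordForest) (o : ℤ) (g : ℤ → ℕ) :
    ∑ x ∈ (cons a r).steps o, g x = g o + (g (a.finish (o + 1)) +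
      (∑ x ∈ a.steps (o + 1), g x + ∑ x ∈ r.steps (a.finish (o + 1) + 1), g x)) := by
  have steps_cons : (cons a r).steps o = insert o (insert (a.finish (o + 1))
      (a.steps (o + 1) ∪ r.steps (a.finish (o + 1) + 1))) := by
    ext x
    simp only [mem_insert, mem_union, mem_steps_cons]
  have ha := a.le_finish (o + 1)
  rw [steps_cons, sum_insert, sum_insert, sum_union]
  · refine disjoint_left.2 fun x hx hx' => ?_
    rw [mem_steps] at hx hx'
    omega
  · simp only [mem_union, mem_steps]
    omega
  · simp only [mem_insert, mem_union, mem_steps]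
    omega

/-- The chords of the word of the forest when it starts in column `o`, as pairs of steps. -/
def chords : ChordForest → ℤ → Finset (ℤ × ℤ)
  | nil, _ => ∅
  | cons a r, o =>
      insert (o, a.finish (o + 1)) (chords a (o + 1) ∪ chords r (a.finish (o + 1) + 1))

lemma mem_chords_cons {a r : ChordForest} {o p q : ℤ} :
    (p, q) ∈ (cons a r).chords o ↔ (p = o ∧ q = a.finish (o + 1)) ∨
      (p, q) ∈ a.chords (o + 1) ∨ (p, q) ∈ r.chords (a.finish (o + 1) + 1) := by
  simp only [chords, mem_insert, mem_union, Prod.mk.injEq]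

lemma chords_range {f : ChordForest} {o p q : ℤ} (hc : (p, q) ∈ f.chords o) :
    o ≤ p ∧ p < q ∧ q < f.finish o := by
  induction f generalizing o with
  | nil => simp [chords] at hc
  | cons a r iha ihr =>
    have ha := a.le_finish (o + 1)
    have hr := r.le_finish (a.finish (o + 1) + 1)
    rw [finish_cons]
    obtain ⟨rfl, rfl⟩ | hc | hc := mem_chords_cons.1 hc
    · omega
    · have := iha hc
      omega
    · have := ihr hc
      omega

lemma exists_chord {f : ChordForest} {o x : ℤ} (hx : x ∈ f.steps o) :
    ∃ p q, (p, q) ∈ f.chords o ∧ (x = p ∨ x = q) := by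
  induction f generalizing o with
  | nil => simp [steps_nil] at hx
  | cons a r iha ihr =>
    simp only [mem_chords_cons]
    obtain rfl | rfl | hx | hx := mem_steps_cons.1 hx
    · exact ⟨_, _, .inl ⟨rfl, rfl⟩, .inl rfl⟩
    · exact ⟨_, _, .inl ⟨rfl, rfl⟩, .inr rfl⟩
    · obtain ⟨p, q, hc, hpq⟩ := iha hx
      exact ⟨p, q, .inr (.inl hc), hpq⟩
    · obtain ⟨p, q, hc, hpq⟩ := ihr hx
      exact ⟨p, q, .inr (.inr hc), hpq⟩

lemma hookProd_eq_prod_chords (f : ChordForest) (o : ℤ) :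
    f.hookProd = ∏ c ∈ f.chords o, qint ((c.2 - c.1 + 1) / 2).toNat := by
  induction f generalizing o with
  | nil => simp [chords, hookProd]
  | cons a r iha ihr =>
    have ha := a.le_finish (o + 1)
    have hsize : ((a.finish (o + 1) - o + 1) / 2).toNat = a.size + 1 := by
      unfold finish
      omega
    rw [chords, prod_insert, prod_union, ← iha, ← ihr, hsize, hookProd, mul_assoc]
    · refine disjoint_left.2 fun c hc hc' => ?_
      have := chords_range hc
      have := chords_range hc'
      omega
    · rw [mem_union]
      rintro (hc | hc)
      · have := chords_range hc
        omega
      · have := chords_range hc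
        omega

/-! ### Height functions -/

/-- The function `h` follows the steps of the word of the forest, starting in column `o`. -/
def Follows (h : ℤ → ℤ) : ChordForest → ℤ → Prop
  | nil, _ => True
  | cons a r, o => h (o + 1) = h o + 1 ∧ Follows h a (o + 1) ∧
      h (a.finish (o + 1) + 1) = h (a.finish (o + 1)) - 1 ∧ Follows h r (a.finish (o + 1) + 1)

lemma Follows.apply_finish {h : ℤ → ℤ} {f : ChordForest} {o : ℤ} (H : Follows h f o) :
    h (f.finish o) = h o := by
  induction f generalizing o with
  | nil => rw [finish_nil]
  | cons a r iha ihr =>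
    obtain ⟨hup, ha, hdown, hr⟩ := H
    rw [finish_cons, ihr hr, hdown, iha ha, hup, add_sub_cancel_right]

lemma Follows.le_apply {h : ℤ → ℤ} {f : ChordForest} {o : ℤ} (H : Follows h f o) {x : ℤ}
    (hx : x ∈ f.points o) : h o ≤ h x := by
  induction f generalizing o with
  | nil =>
    rw [points_nil, Finset.mem_singleton] at hx
    rw [hx]
  | cons a r iha ihr =>
    obtain ⟨hup, ha, hdown, hr⟩ := H
    have hfinish := ha.apply_finish
    obtain rfl | hx | hx := mem_points_cons.1 hx
    · exact le_rfl
    · have := iha ha hx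
      omega
    · have := ihr hr hx
      omega

lemma Follows.chord {h : ℤ → ℤ} {f : ChordForest} {o : ℤ} (H : Follows h f o) {p q : ℤ}
    (hc : (p, q) ∈ f.chords o) :
    h (p + 1) = h p + 1 ∧ h (q + 1) = h q - 1 ∧ h (q + 1) = h p ∧
      ∀ x, p < x → x ≤ q → h p < h x := by
  induction f generalizing o with
  | nil => simp [chords] at hc
  | cons a r iha ihr =>
    obtain ⟨hup, ha, hdown, hr⟩ := H
    obtain ⟨rfl, rfl⟩ | hc | hc := mem_chords_cons.1 hc
    · have hfinish := ha.apply_finish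
      refine ⟨hup, hdown, by omega, fun x hpx hxq => ?_⟩
      have := ha.le_apply (mem_points.2 ⟨hpx, hxq⟩)
      omega
    · exact iha ha hc
    · exact ihr hr hc

lemma Follows.left_le_apply {h : ℤ → ℤ} {f : ChordForest} {o : ℤ} (H : Follows h f o)
    {a b : ℤ} (hoa : o ≤ a) (hb : b ≤ f.finish o)
    (hclosed : ∀ p q, (p, q) ∈ f.chords o → a ≤ q → q < b → a ≤ p) {x : ℤ} (hax : a ≤ x)
    (hxb : x ≤ b) : h a ≤ h x := by
  by_contra! hlt
  obtain ⟨y, ⟨hay, hyb, hy⟩, hleast⟩ := Int.exists_least_of_bdd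
    (P := fun y => a ≤ y ∧ y ≤ b ∧ h y < h a) ⟨a, fun y hy => hy.1⟩ ⟨x, hax, hxb, hlt⟩
  have hne : y ≠ a := by
    rintro rfl
    exact lt_irrefl _ hy
  have hprev : h a ≤ h (y - 1) := by
    by_contra! hprev
    have := hleast (y - 1) ⟨by omega, by omega, hprev⟩
    omega
  obtain ⟨p, q, hc, hpq⟩ := exists_chord (f := f) (o := o) (x := y - 1)
    (mem_steps.2 ⟨by omega, by omega⟩)
  obtain ⟨hp, -, hqp, -⟩ := H.chord hc
  have hrange := chords_range hc
  obtain rfl | rfl := hpq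
  · rw [sub_add_cancel] at hp
    omega
  · rw [sub_add_cancel] at hqp
    have := hleast p ⟨hclosed p _ hc (by omega) (by omega), by omega, by omega⟩
    omega

lemma Follows.right_le_apply {h : ℤ → ℤ} {f : ChordForest} {o : ℤ} (H : Follows h f o)
    {a b : ℤ} (hoa : o ≤ a) (hb : b ≤ f.finish o)
    (hclosed : ∀ p q, (p, q) ∈ f.chords o → a ≤ p → p < b → q < b) {x : ℤ} (hax : a ≤ x)
    (hxb : x ≤ b) : h b ≤ h x := by
  by_contra! hlt
  obtain ⟨y, ⟨hay, hyb, hy⟩, hgreatest⟩ := Int.exists_greatest_of_bdd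
    (P := fun y => a ≤ y ∧ y ≤ b ∧ h y < h b) ⟨b, fun y hy => hy.2.1⟩ ⟨x, hax, hxb, hlt⟩
  have hne : y ≠ b := by
    rintro rfl
    exact lt_irrefl _ hy
  have hnext : h b ≤ h (y + 1) := by
    by_contra! hnext
    have := hgreatest (y + 1) ⟨by omega, by omega, hnext⟩
    omega
  obtain ⟨p, q, hc, hpq⟩ := exists_chord (f := f) (o := o) (x := y)
    (mem_steps.2 ⟨by omega, by omega⟩)
  obtain ⟨-, hq, hqp, -⟩ := H.chord hc
  have hrange := chords_range hc
  obtain rfl | rfl := hpq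
  · have := hclosed y q hc hay (by omega)
    have := hgreatest (q + 1) ⟨by omega, by omega, by omega⟩
    omega
  · omega

lemma exists_first_return {h : ℤ → ℤ} {o z : ℤ} (hoz : o < z)
    (hstep : ∀ x, o ≤ x → x < z → h (x + 1) = h x + 1 ∨ h (x + 1) = h x - 1)
    (hmin : ∀ x, o ≤ x → x ≤ z → h o ≤ h x) (hend : h z = h o) :
    ∃ m, o < m ∧ m < z ∧ h (o + 1) = h o + 1 ∧ h m = h o + 1 ∧ h (m + 1) = h o ∧
      ∀ x, o < x → x ≤ m → h o < h x := by
  obtain ⟨y, ⟨hoy, hy⟩, hleast⟩ := Int.exists_least_of_bdd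
    (P := fun y => o < y ∧ h y = h o) ⟨o, fun y hy => hy.1.le⟩ ⟨z, hoz, hend⟩
  have hyz := hleast z ⟨hoz, hend⟩
  have habove : ∀ x, o < x → x < y → h o < h x := fun x hox hxy =>
    lt_of_le_of_ne (hmin x (by omega) (by omega)) fun heq => by
      have := hleast x ⟨hox, heq.symm⟩
      omega
  have hup : h (o + 1) = h o + 1 := by
    have := hstep o le_rfl hoz
    have := hmin (o + 1) (by omega) (by omega)
    omega
  have hne : y ≠ o + 1 := by
    rintro rfl
    omega
  have hdown := hstep (y - 1) (by omega) (by omega)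
  have hprev := habove (y - 1) (by omega) (by omega)
  rw [sub_add_cancel] at hdown
  refine ⟨y - 1, by omega, by omega, hup, by omega, by rw [sub_add_cancel, hy], ?_⟩
  exact fun x hox hxy => habove x hox (by omega)

lemma exists_follows {h : ℤ → ℤ} {o z : ℤ} (hoz : o ≤ z)
    (hstep : ∀ x, o ≤ x → x < z → h (x + 1) = h x + 1 ∨ h (x + 1) = h x - 1)
    (hmin : ∀ x, o ≤ x → x ≤ z → h o ≤ h x) (hend : h z = h o) :
    ∃ f : ChordForest, Follows h f o ∧ f.finish o = z := by
  induction hlen : (z - o).toNat using Nat.strong_induction_on generalizing o z with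
  | _ len ih =>
    obtain rfl | hlt := eq_or_lt_of_le hoz
    · exact ⟨nil, trivial, finish_nil o⟩
    · obtain ⟨m, hom, hmz, hup, hm, hreturn, habove⟩ := exists_first_return hlt hstep hmin hend
      obtain ⟨a, ha, rfl⟩ := ih (m - (o + 1)).toNat (by omega) (o := o + 1) (z := m) hom
        (fun x _ _ => hstep x (by omega) (by omega))
        (fun x _ _ => by rw [hup]; exact habove x (by omega) (by omega)) (by rw [hm, hup]) rfl
      obtain ⟨r, hr, rfl⟩ := ih (z - (a.finish (o + 1) + 1)).toNat (by omega)
        (o := a.finish (o + 1) + 1) (z := z) (by omega)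
        (fun x _ _ => hstep x (by omega) (by omega))
        (fun x _ _ => by rw [hreturn]; exact hmin x (by omega) (by omega))
        (by rw [hend, hreturn]) rfl
      exact ⟨cons a r, ⟨hup, ha, by rw [hreturn, hm, add_sub_cancel_right], hr⟩,
        finish_cons a r o⟩

/-! ### Labels of columns and steps -/

/-- The labels `d` of the points and `e` of the steps are compatible along the chord `(p, q)`. -/
structure Compatible (d e : ℤ → ℕ) (p q : ℤ) : Prop where
  up : d (p + 1) ≤ d p ∧ d p ≤ d (p + 1) + 1
  down : d q ≤ d (q + 1) ∧ d (q + 1) ≤ d q + 1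
  step_eq : e q = e p
  le_step : ∀ x, p ≤ x → x ≤ q → e p ≤ e x
  le_point : ∀ x, p < x → x ≤ q → e p ≤ d x

/-- The configuration records the labels `d` and `e`, diminished by the label `b` of the
enclosing chord. -/
def Records (d e : ℤ → ℕ) : {f : ChordForest} → Cfg f → ℤ → ℕ → Prop
  | _, .point t, o, b => d o = b + t
  | _, .node (a := a) t k ca cr, o, b =>
      d o = b + t ∧ e o = b + k ∧ e (a.finish (o + 1)) = b + k ∧
      Records d e ca (o + 1) (b + k) ∧ Records d e cr (a.finish (o + 1) + 1) b

section Records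

variable {d e d' e' : ℤ → ℕ} {f : ChordForest} {c c' : Cfg f} {o : ℤ} {b : ℕ}

lemma Records.first_eq (H : Records d e c o b) : d o = b + first c := by
  cases c with
  | point t => exact H
  | node t k ca cr => exact H.1

lemma Records.last_eq (H : Records d e c o b) : d (f.finish o) = b + last c := by
  induction c generalizing o b with
  | point t => rwa [finish_nil]
  | node t k ca cr _ ihr => rw [finish_cons, ihr H.2.2.2.2, last_node]

lemma Records.congr (H : Records d e c o b) (hd : ∀ x ∈ f.points o, d' x = d x)
    (he : ∀ x ∈ f.steps o, e' x = e x) : Records d' e' c o b := by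
  induction c generalizing o b with
  | point t => exact (hd o (by simp [points_nil])).trans H
  | node t k ca cr iha ihr =>
    simp only [mem_points_cons, mem_steps_cons, or_imp, forall_and, forall_eq] at hd he
    obtain ⟨hd_start, hda, hdr⟩ := hd
    obtain ⟨he_up, he_down, hea, her⟩ := he
    obtain ⟨hstart, hup, hdown, ha, hr⟩ := H
    exact ⟨hd_start.trans hstart, he_up.trans hup, he_down.trans hdown, iha ha hda hea,
      ihr hr hdr her⟩

lemma Records.labels_unique (H : Records d e c o b) (H' : Records d' e' c o b) :
    (∀ x ∈ f.points o, d x = d' x) ∧ ∀ x ∈ f.steps o, e x = e' x := by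
  induction c generalizing o b with
  | point t => simpa [points_nil, steps_nil] using Eq.trans H (Eq.symm H')
  | node t k ca cr iha ihr =>
    obtain ⟨hstart, hup, hdown, ha, hr⟩ := H
    obtain ⟨hstart', hup', hdown', ha', hr'⟩ := H'
    simp only [mem_points_cons, mem_steps_cons, or_imp, forall_and, forall_eq]
    exact ⟨⟨hstart.trans hstart'.symm, (iha ha ha').1, (ihr hr hr').1⟩,
      hup.trans hup'.symm, hdown.trans hdown'.symm, (iha ha ha').2, (ihr hr hr').2⟩

lemma Records.cfg_unique (H : Records d e c o b) (H' : Records d e c' o b) : c = c' := by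
  induction c generalizing o b with
  | point t =>
    obtain ⟨t'⟩ := c'
    rw [Nat.add_left_cancel (Eq.trans (Eq.symm H) H')]
  | node t k ca cr iha ihr =>
    obtain - | ⟨t', k', ca', cr'⟩ := c'
    obtain ⟨hstart, hup, -, ha, hr⟩ := H
    obtain ⟨hstart', hup', -, ha', hr'⟩ := H'
    obtain rfl : t = t' := by omega
    obtain rfl : k = k' := by omega
    rw [iha ha ha', ihr hr hr']

lemma exists_records (c : Cfg f) (o : ℤ) (b : ℕ) : ∃ d e : ℤ → ℕ, Records d e c o b := by
  induction c generalizing o b with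
  | point t => exact ⟨fun _ => b + t, fun _ => 0, rfl⟩
  | @node a r t k ca cr iha ihr =>
    set m := a.finish (o + 1) with hm
    have ham := a.le_finish (o + 1)
    obtain ⟨d₁, e₁, ha⟩ := iha (o + 1) (b + k)
    obtain ⟨d₂, e₂, hr⟩ := ihr (m + 1) b
    refine ⟨fun x => if x = o then b + t else if x ≤ m then d₁ x else d₂ x,
      fun x => if x = o ∨ x = m then b + k else if x < m then e₁ x else e₂ x,
      by simp, by simp, by simp [hm], ha.congr (fun x hx => ?_) (fun x hx => ?_),
      hr.congr (fun x hx => ?_) (fun x hx => ?_)⟩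
    · rw [mem_points] at hx
      rw [if_neg (by omega), if_pos hx.2]
    · rw [mem_steps] at hx
      rw [if_neg (by omega), if_pos hx.2]
    · rw [mem_points] at hx
      rw [if_neg (by omega), if_neg (by omega)]
    · rw [mem_steps] at hx
      rw [if_neg (by omega), if_neg (by omega)]

lemma Records.le_labels (H : Records d e c o b) :
    (∀ x ∈ f.points o, b ≤ d x) ∧ ∀ x ∈ f.steps o, b ≤ e x := by
  induction c generalizing o b with
  | point t =>
    have hd : d o = b + t := H
    simp [points_nil, steps_nil, hd]
  | node t k ca cr iha ihr =>
    obtain ⟨hstart, hup, hdown, ha, hr⟩ := H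
    simp only [mem_points_cons, mem_steps_cons, or_imp, forall_and, forall_eq]
    exact ⟨⟨by omega, fun x hx => by linarith [(iha ha).1 x hx], (ihr hr).1⟩,
      by omega, by omega, fun x hx => by linarith [(iha ha).2 x hx], (ihr hr).2⟩

lemma Records.compatible (H : Records d e c o b) (hc : Valid c) {p q : ℤ}
    (hpq : (p, q) ∈ f.chords o) : Compatible d e p q := by
  induction c generalizing o b with
  | point t => simp [chords] at hpq
  | @node a r t k ca cr iha ihr =>
    obtain ⟨hstart, hup, hdown, ha, hr⟩ := H
    obtain ⟨hfirst, hlast, hca, hcr⟩ := hc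
    obtain ⟨rfl, rfl⟩ | hpq | hpq := mem_chords_cons.1 hpq
    · have ha_first := ha.first_eq
      have ha_last := ha.last_eq
      have hr_first := hr.first_eq
      obtain ⟨hle_point, hle_step⟩ := ha.le_labels
      refine ⟨by omega, by omega, by omega, fun x hpx hxq => ?_, fun x hpx hxq => ?_⟩
      · obtain rfl | hpx := eq_or_lt_of_le hpx
        · exact le_rfl
        · obtain rfl | hxq := eq_or_lt_of_le hxq
          · rw [hup, hdown]
          · rw [hup]
            exact hle_step x (mem_steps.2 ⟨hpx, hxq⟩)
      · rw [hup]
        exact hle_point x (mem_points.2 ⟨hpx, hxq⟩)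
    · exact iha ha hca hpq
    · exact ihr hr hcr hpq

lemma exists_cfg (H : ∀ p q, (p, q) ∈ f.chords o → Compatible d e p q)
    (hd : ∀ x ∈ f.points o, b ≤ d x) (he : ∀ x ∈ f.steps o, b ≤ e x) :
    ∃ c : Cfg f, Valid c ∧ Records d e c o b := by
  induction f generalizing o b with
  | nil =>
    have := hd o (by simp [points_nil])
    exact ⟨.point (d o - b), trivial, (Nat.add_sub_cancel' this).symm⟩
  | cons a r iha ihr =>
    simp only [mem_points_cons, mem_steps_cons, or_imp, forall_and, forall_eq] at hd he
    simp only [mem_chords_cons] at H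
    have hpq := H o _ (.inl ⟨rfl, rfl⟩)
    obtain ⟨ca, hca, ha⟩ := iha (o := o + 1) (b := e o)
      (fun p q hc => H p q (.inr (.inl hc)))
      (fun x hx => hpq.le_point x (by have := mem_points.1 hx; omega) (mem_points.1 hx).2)
      (fun x hx => hpq.le_step x (by have := mem_steps.1 hx; omega) (mem_steps.1 hx).2.le)
    obtain ⟨cr, hcr, hr⟩ := ihr (fun p q hc => H p q (.inr (.inr hc))) hd.2.2 he.2.2.2
    have ha_first := ha.first_eq
    have ha_last := ha.last_eq
    have hr_first := hr.first_eq
    have hup := hpq.up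
    have hdown := hpq.down
    have hstep := hpq.step_eq
    obtain ⟨hd_start, -⟩ := hd
    obtain ⟨he_up, -⟩ := he
    refine ⟨.node (d o - b) (e o - b) ca cr, ⟨by omega, by omega, hca, hcr⟩,
      by omega, by omega, by omega, ?_, hr⟩
    rwa [Nat.add_sub_cancel' he_up]

lemma Records.two_mul_sum (H : Records d e c o b) :
    2 * ∑ x ∈ f.points o, d x =
      ∑ x ∈ f.steps o, e x + 2 * weight c + b * (2 * f.size + 2) := by
  induction c generalizing o b with
  | point t =>
    have hd : d o = b + t := H
    simp only [points_nil, steps_nil, sum_singleton, sum_empty, weight, size, hd]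
    ring
  | node t k ca cr iha ihr =>
    obtain ⟨hstart, hup, hdown, ha, hr⟩ := H
    rw [sum_points_cons, sum_steps_cons, mul_add, mul_add, iha ha, ihr hr, hstart, hup, hdown]
    simp only [size, weight]
    ring

end Records

end ChordForest

/-! ### Height functions of Dyck paths -/

/-- The number of up-steps minus the number of down-steps before position `y`. -/
def stepSum {N : ℕ} (s : Fin N → Bool) (y : ℤ) : ℤ :=
  ((univ.filter fun i : Fin N => ((i : ℕ) : ℤ) < y ∧ s i = true).card : ℤ) -
    ((univ.filter fun i : Fin N => ((i : ℕ) : ℤ) < y ∧ s i = false).card : ℤ)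

section StepSum

variable {N : ℕ} (s : Fin N → Bool)

lemma stepSum_eq_sum (y : ℤ) :
    stepSum s y =
      ∑ i : Fin N, if ((i : ℕ) : ℤ) < y then (if s i = true then 1 else -1) else 0 := by
  simp only [stepSum, card_filter, Nat.cast_sum, ← sum_sub_distrib]
  refine sum_congr rfl fun i _ => ?_
  cases s i <;> by_cases h : ((i : ℕ) : ℤ) < y <;> simp [h]

lemma stepSum_of_nonpos {y : ℤ} (hy : y ≤ 0) : stepSum s y = 0 := by
  rw [stepSum_eq_sum]
  exact sum_eq_zero fun i _ => if_neg (by omega)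

lemma stepSum_succ (i : Fin N) :
    stepSum s (((i : ℕ) : ℤ) + 1) = stepSum s (i : ℕ) + if s i = true then 1 else -1 := by
  rw [← sub_eq_iff_eq_add', stepSum_eq_sum, stepSum_eq_sum, ← sum_sub_distrib,
    sum_eq_single_of_mem i (mem_univ i)]
  · simp
  · intro j _ hj
    have hlt : (((j : ℕ) : ℤ) < ((i : ℕ) : ℤ) + 1) ↔ ((j : ℕ) : ℤ) < (i : ℕ) := by
      have := Fin.val_ne_of_ne hj
      omega
    simp [hlt]

lemma stepSum_of_ge {y : ℤ} (hy : (N : ℤ) ≤ y) :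
    stepSum s y = 2 * ((univ.filter fun i => s i = true).card : ℤ) - N := by
  have hlt : ∀ i : Fin N, ((i : ℕ) : ℤ) < y := fun i => by omega
  have hcard := card_filter_add_card_filter_not (s := (univ : Finset (Fin N)))
    fun i => s i = true
  simp only [Bool.not_eq_true, card_univ, Fintype.card_fin] at hcard
  simp only [stepSum, hlt, true_and]
  omega

lemma stepSum_eq_add_two_mul_card {a b : ℕ} (hab : a ≤ b) (hb : b ≤ N) :
    stepSum s b = stepSum s a + 2 * #{m : Fin N | a ≤ m ∧ m < b ∧ s m = true} - (b - a) := by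
  induction b, hab using Nat.le_induction with
  | base =>
    rw [filter_false_of_mem fun m _ => by omega]
    simp
  | succ b hab ih =>
    have hval (m : Fin N) : m = ⟨b, hb⟩ ↔ (m : ℕ) = b := Fin.ext_iff
    have hcard : #{m : Fin N | a ≤ m ∧ m < b + 1 ∧ s m = true} =
        #{m : Fin N | a ≤ m ∧ m < b ∧ s m = true} + if s ⟨b, hb⟩ = true then 1 else 0 := by
      split_ifs with hs
      · rw [← card_insert_of_notMem (a := ⟨b, hb⟩) (by simp)]
        congr 1
        ext m
        grind
      · rw [add_zero]
        congr 1
        ext m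
        grind
    have hsucc := stepSum_succ s ⟨b, hb⟩
    rw [hcard, Nat.cast_succ, hsucc, ih (by omega)]
    split_ifs <;> push_cast <;> ring

end StepSum

namespace DyckPath

variable {n : ℕ} (P : DyckPath n)

lemma ht_eq_stepSum (x : ℤ) : P.ht x = stepSum P.step (x + n) := rfl

lemma ht_step (i : Fin (2 * n)) :
    P.ht ((i : ℕ) - n + 1) = P.ht ((i : ℕ) - n) + if P.step i = true then 1 else -1 := by
  have := stepSum_succ P.step i
  rw [ht_eq_stepSum, ht_eq_stepSum]
  convert this using 2 <;> ring_nf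

lemma ht_of_le {x : ℤ} (hx : x ≤ -n) : P.ht x = 0 :=
  stepSum_of_nonpos _ (by omega)

lemma ht_of_ge {x : ℤ} (hx : (n : ℤ) ≤ x) : P.ht x = 0 := by
  rw [ht_eq_stepSum, stepSum_of_ge _ (by push_cast; omega), P.balanced]
  push_cast
  ring

lemma ht_nonneg (x : ℤ) : 0 ≤ P.ht x := by
  obtain h | h := le_or_gt x (-n)
  · exact (P.ht_of_le h).ge
  obtain h' | h' := le_or_gt (n : ℤ) x
  · exact (P.ht_of_ge h').ge
  have hcount := P.nonneg (x + n).toNat (by omega)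
  have hlt : ∀ i : Fin (2 * n), ((i : ℕ) < (x + n).toNat) ↔ ((i : ℕ) : ℤ) < x + n :=
    fun i => by omega
  simp only [hlt] at hcount
  rw [ht]
  omega

lemma ht_succ {x : ℤ} (hl : -(n : ℤ) ≤ x) (hr : x < n) :
    P.ht (x + 1) = P.ht x + 1 ∨ P.ht (x + 1) = P.ht x - 1 := by
  have hstep := P.ht_step ⟨(x + n).toNat, by omega⟩
  have hx : (((x + n).toNat : ℕ) : ℤ) - n = x := by omega
  simp only [hx] at hstep
  split_ifs at hstep <;> omega

lemma ht_parity {x : ℤ} (hl : -(n : ℤ) ≤ x) (hr : x ≤ n) : (P.ht x - x - n) % 2 = 0 := by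
  induction x, hl using Int.leInduction with
  | base => simp [P.ht_of_le le_rfl]
  | succ x hl ih =>
    have := ih (by omega)
    have := P.ht_succ hl (by omega)
    omega

lemma ht_le_add {x : ℤ} (hl : -(n : ℤ) ≤ x) (hr : x ≤ n) : P.ht x ≤ x + n := by
  induction x, hl using Int.leInduction with
  | base => simp [P.ht_of_le le_rfl]
  | succ x hl ih =>
    have := ih (by omega)
    have := P.ht_succ hl (by omega)
    omega

lemma ht_le_sub {x : ℤ} (hl : -(n : ℤ) ≤ x) (hr : x ≤ n) : P.ht x ≤ n - x := by
  induction x, hr using Int.leInductionDown with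
  | base => simp [P.ht_of_ge le_rfl]
  | pred x hr ih =>
    have := ih (by omega)
    have hstep := P.ht_succ (x := x - 1) (by omega) (by omega)
    rw [sub_add_cancel] at hstep
    omega

lemma ht_le (x : ℤ) : P.ht x ≤ n := by
  obtain h | h := le_or_gt x (-n)
  · rw [P.ht_of_le h]
    omega
  obtain h' | h' := le_or_gt (n : ℤ) x
  · rw [P.ht_of_ge h']
    omega
  have := P.ht_le_add h.le h'.le
  have := P.ht_le_sub h.le h'.le
  omega

variable {P} in
lemma ext_ht {Q : DyckPath n} (h : ∀ x, P.ht x = Q.ht x) : P = Q := by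
  have hstep : P.step = Q.step := by
    funext i
    have hP := P.ht_step i
    have hQ := Q.ht_step i
    rw [h, h] at hP
    cases hPi : P.step i <;> cases hQi : Q.step i <;> simp [hPi, hQi] at hP hQ ⊢ <;> omega
  cases P
  cases Q
  simpa using hstep

lemma exists_ht_eq {H : ℤ → ℤ} (hl : ∀ x ≤ -(n : ℤ), H x = 0) (hr : ∀ x, (n : ℤ) ≤ x → H x = 0)
    (hnonneg : ∀ x, 0 ≤ H x)
    (hstep : ∀ x, -(n : ℤ) ≤ x → x < n → H (x + 1) = H x + 1 ∨ H (x + 1) = H x - 1) :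
    ∃ Q : DyckPath n, ∀ x, Q.ht x = H x := by
  let s : Fin (2 * n) → Bool := fun i => decide (H ((i : ℕ) - n + 1) = H ((i : ℕ) - n) + 1)
  have hs : ∀ x, -(n : ℤ) ≤ x → x ≤ n → stepSum s (x + n) = H x := by
    intro x hx hx'
    induction x, hx using Int.leInduction with
    | base => rw [hl _ le_rfl, stepSum_of_nonpos _ (by omega)]
    | succ x hx ih =>
      have hsucc := stepSum_succ s ⟨(x + n).toNat, by omega⟩
      have hcast : (((x + n).toNat : ℕ) : ℤ) = x + n := by omega
      simp only [hcast, s, add_sub_cancel_right, decide_eq_true_eq] at hsucc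
      rw [add_right_comm, hsucc, ih (by omega)]
      split_ifs with hup
      · exact hup.symm
      · exact ((hstep x hx (by omega)).resolve_left hup).symm
  let Q : DyckPath n :=
    { step := s
      balanced := by
        have hend := hs n (by omega) le_rfl
        rw [hr n le_rfl, stepSum_of_ge _ (by push_cast; omega)] at hend
        push_cast at hend
        omega
      nonneg := fun k hk => by
        have hht := hs (k - n) (by omega) (by omega)
        have := hnonneg (k - n)
        simp only [stepSum, sub_add_cancel, Nat.cast_lt] at hht
        omega }
  refine ⟨Q, fun x => ?_⟩
  obtain h | h := le_or_gt x (-n)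
  · rw [hl x h, Q.ht_of_le h]
  obtain h' | h' := le_or_gt (n : ℤ) x
  · rw [hr x h', Q.ht_of_ge h']
  exact hs x h.le h'.le

lemma exists_forest :
    ∃ f : ChordForest, f.Follows P.ht (-n) ∧ f.finish (-n) = n :=
  ChordForest.exists_follows (by omega) (fun _ hl hr => P.ht_succ hl hr)
    (fun x _ _ => by rw [P.ht_of_le le_rfl]; exact P.ht_nonneg x)
    (by rw [P.ht_of_le le_rfl, P.ht_of_ge le_rfl])

end DyckPath

/-- The number of cells in column `x` between two paths. -/
def pathGap {n : ℕ} (lam mu : DyckPath n) (x : ℤ) : ℕ := ((mu.ht x - lam.ht x) / 2).toNat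

section PathGap

variable {n : ℕ} {lam mu : DyckPath n}

lemma range_of_pathGap_ne_zero {x : ℤ} (hx : pathGap lam mu x ≠ 0) :
    -(n : ℤ) < x ∧ x < n := by
  constructor
  · by_contra! h
    simp [pathGap, DyckPath.ht_of_le _ h] at hx
  · by_contra! h
    simp [pathGap, DyckPath.ht_of_ge _ h] at hx

lemma ht_eq_add_pathGap (hle : ∀ x, lam.ht x ≤ mu.ht x) (x : ℤ) :
    mu.ht x = lam.ht x + 2 * pathGap lam mu x := by
  obtain h | h := le_or_gt x (-n)
  · simp [pathGap, DyckPath.ht_of_le _ h]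
  obtain h' | h' := le_or_gt (n : ℤ) x
  · simp [pathGap, DyckPath.ht_of_ge _ h']
  have := lam.ht_parity h.le h'.le
  have := mu.ht_parity h.le h'.le
  have := hle x
  rw [pathGap]
  omega

lemma mem_skewCells (hle : ∀ x, lam.ht x ≤ mu.ht x) {x z : ℤ} :
    (x, z) ∈ skewCells lam mu ↔ ∃ k < pathGap lam mu x, z = lam.ht x + 2 * k := by
  have hmu := ht_eq_add_pathGap hle x
  have hnonneg := lam.ht_nonneg x
  have hmu_le := mu.ht_le x
  simp only [skewCells, mem_filter, mem_product, Finset.mem_Icc]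
  constructor
  · rintro ⟨⟨⟨hl, hr⟩, -⟩, hlam_le, hle_mu, hparity⟩
    have := lam.ht_parity hl hr
    exact ⟨((z - lam.ht x) / 2).toNat, by omega, by omega⟩
  · rintro ⟨k, hk, rfl⟩
    obtain ⟨hl, hr⟩ := range_of_pathGap_ne_zero (Nat.ne_zero_of_lt hk)
    have := lam.ht_parity hl.le hr.le
    omega

lemma card_skewCells (hle : ∀ x, lam.ht x ≤ mu.ht x) :
    (skewCells lam mu).card = ∑ x ∈ Icc (-(n : ℤ)) n, pathGap lam mu x := by
  have hcells : skewCells lam mu =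
      ((Icc (-(n : ℤ)) n).sigma fun x => range (pathGap lam mu x)).image
        fun c => (c.1, lam.ht c.1 + 2 * (c.2 : ℤ)) := by
    ext ⟨x, z⟩
    simp only [mem_skewCells hle, mem_image, mem_sigma, Finset.mem_Icc, Finset.mem_range,
      Sigma.exists, Prod.mk.injEq]
    constructor
    · rintro ⟨k, hk, rfl⟩
      obtain ⟨hl, hr⟩ := range_of_pathGap_ne_zero (Nat.ne_zero_of_lt hk)
      exact ⟨x, k, ⟨⟨hl.le, hr.le⟩, hk⟩, rfl, rfl⟩
    · rintro ⟨_, k, ⟨-, hk⟩, rfl, rfl⟩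
      exact ⟨k, hk, rfl⟩
  rw [hcells, card_image_of_injective, card_sigma]
  · simp only [card_range]
  · rintro ⟨x, k⟩ ⟨y, l⟩ hxy
    simp only [Prod.mk.injEq] at hxy
    obtain ⟨rfl, hkl⟩ := hxy
    obtain rfl : k = l := by omega
    rfl

end PathGap

/-! ### Tiles cut out by labels on the steps -/

/-- All steps between the columns `x` and `y` have a label exceeding `k`. -/
def Run (e : ℤ → ℕ) (k : ℕ) (x y : ℤ) : Prop := ∀ m, min x y ≤ m → m < max x y → k < e m

namespace Run

variable {e : ℤ → ℕ} {k : ℕ} {x y z : ℤ}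

lemma refl (x : ℤ) : Run e k x x := fun m _ _ => by omega

lemma symm (H : Run e k x y) : Run e k y x := fun m _ _ => H m (by omega) (by omega)

lemma trans (H : Run e k x y) (H' : Run e k y z) : Run e k x z := fun m _ _ => by
  by_cases h : min x y ≤ m ∧ m < max x y
  · exact H m h.1 h.2
  · exact H' m (by omega) (by omega)

lemma mono {l : ℕ} (hl : l ≤ k) (H : Run e k x y) : Run e l x y :=
  fun m h h' => hl.trans_lt (H m h h')

lemma succ_iff : Run e k x (x + 1) ↔ k < e x :=
  ⟨fun H => H x (by omega) (by omega), fun H m _ _ => by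
    obtain rfl : m = x := by omega
    exact H⟩

end Run

open Classical in
/-- The part of the path `h` that is joined to column `x` by a run of level `k`, raised to
layer `k`. -/
def runTile (n : ℕ) (h : ℤ → ℤ) (e : ℤ → ℕ) (x : ℤ) (k : ℕ) : Finset (ℤ × ℤ) :=
  ((Icc (-(n : ℤ)) n).filter (Run e k x)).image fun y => (y, h y + 2 * k)

/-- The tiles through the cells in the layers `k < d x` of all columns `x`. -/
def runTiles (n : ℕ) (h : ℤ → ℤ) (d e : ℤ → ℕ) : Finset (Finset (ℤ × ℤ)) :=
  ((Icc (-(n : ℤ)) n).sigma fun x => range (d x)).image fun c => runTile n h e c.1 c.2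

/-- The labels of the points vanish outside of `(-n, n)`, and a tile that crosses a step covers
both ends of the step. -/
structure LabelBounds (n : ℕ) (d e : ℤ → ℕ) : Prop where
  range : ∀ x, d x ≠ 0 → -(n : ℤ) < x ∧ x < n
  le_left : ∀ x, e x ≤ d x
  le_right : ∀ x, e x ≤ d (x + 1)

lemma runTile_eq_of_run {n : ℕ} {h : ℤ → ℤ} {e : ℤ → ℕ} {x y : ℤ} {k : ℕ} (H : Run e k x y) :
    runTile n h e x k = runTile n h e y k := by
  classical
  unfold runTile
  congr 1
  exact filter_congr fun z _ => ⟨fun hz => H.symm.trans hz, fun hz => H.trans hz⟩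

namespace LabelBounds

variable {n : ℕ} {h : ℤ → ℤ} {d e : ℤ → ℕ} {x y z : ℤ} {k : ℕ}

lemma lt_of_run (B : LabelBounds n d e) (hk : k < d x) (H : Run e k x y) : k < d y := by
  obtain hxy | rfl | hxy := lt_trichotomy x y
  · have := (H (y - 1) (by omega) (by omega)).trans_le (B.le_right (y - 1))
    rwa [sub_add_cancel] at this
  · exact hk
  · exact (H y (by omega) (by omega)).trans_le (B.le_left y)

lemma range_of_lt (B : LabelBounds n d e) (hk : k < d x) : -(n : ℤ) ≤ x ∧ x ≤ n := by
  have := B.range x (Nat.ne_zero_of_lt hk)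
  omega

lemma mem_runTile (B : LabelBounds n d e) (hk : k < d x) :
    (y, z) ∈ runTile n h e x k ↔ Run e k x y ∧ z = h y + 2 * k := by
  simp only [runTile, mem_image, mem_filter, Finset.mem_Icc, Prod.mk.injEq]
  constructor
  · rintro ⟨_, ⟨-, hrun⟩, rfl, rfl⟩
    exact ⟨hrun, rfl⟩
  · rintro ⟨hrun, rfl⟩
    exact ⟨y, ⟨B.range_of_lt (B.lt_of_run hk hrun), hrun⟩, rfl, rfl⟩

lemma self_mem_runTile (B : LabelBounds n d e) (hk : k < d x) :
    (x, h x + 2 * k) ∈ runTile n h e x k :=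
  (B.mem_runTile hk).2 ⟨Run.refl x, rfl⟩

lemma mem_runTiles (B : LabelBounds n d e) {t : Finset (ℤ × ℤ)} :
    t ∈ runTiles n h d e ↔ ∃ x k, k < d x ∧ runTile n h e x k = t := by
  simp only [runTiles, mem_image, mem_sigma, Finset.mem_Icc, Finset.mem_range, Sigma.exists]
  exact exists₂_congr fun x k => ⟨fun ⟨⟨_, hk⟩, ht⟩ => ⟨hk, ht⟩,
    fun ⟨hk, ht⟩ => ⟨⟨B.range_of_lt hk, hk⟩, ht⟩⟩

lemma exists_interval (B : LabelBounds n d e) (hk : k < d x) :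
    ∃ a b : ℤ, ¬ k < e (a - 1) ∧ ¬ k < e b ∧ ∀ y, Run e k x y ↔ a ≤ y ∧ y ≤ b := by
  have hrange : ∀ y, Run e k x y → -(n : ℤ) ≤ y ∧ y ≤ n :=
    fun y hy => B.range_of_lt (B.lt_of_run hk hy)
  obtain ⟨a, ha, hleast⟩ := Int.exists_least_of_bdd ⟨-(n : ℤ), fun y hy => (hrange y hy).1⟩
    ⟨x, Run.refl (e := e) (k := k) x⟩
  obtain ⟨b, hb, hgreatest⟩ := Int.exists_greatest_of_bdd ⟨(n : ℤ), fun y hy => (hrange y hy).2⟩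
    ⟨x, Run.refl (e := e) (k := k) x⟩
  have hax := hleast x (Run.refl x)
  have hxb := hgreatest x (Run.refl x)
  refine ⟨a, b, fun hlt => ?_, fun hlt => ?_, fun y =>
    ⟨fun hy => ⟨hleast y hy, hgreatest y hy⟩, fun hy m _ _ =>
      ha.symm.trans hb m (by omega) (by omega)⟩⟩
  · have hstep := Run.succ_iff.2 hlt
    rw [sub_add_cancel] at hstep
    have := hleast (a - 1) (ha.trans hstep.symm)
    omega
  · have := hgreatest (b + 1) (hb.trans (Run.succ_iff.2 hlt))
    omega

lemma runTiles_eq_image_Ico (B : LabelBounds n d e) :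
    runTiles n h d e = ((Icc (-(n : ℤ)) n).sigma fun x => Ico (e x) (d x)).image
      fun c => runTile n h e c.1 c.2 := by
  ext t
  simp only [B.mem_runTiles, mem_image, mem_sigma, Finset.mem_Icc, Finset.mem_Ico, Sigma.exists]
  constructor
  · rintro ⟨x, k, hk, rfl⟩
    obtain ⟨a, b, -, hb, hrun⟩ := B.exists_interval hk
    have hx := (hrun x).1 (Run.refl x)
    have hxb := (hrun b).2 ⟨hx.1.trans hx.2, le_rfl⟩
    have hkb := B.lt_of_run hk hxb
    exact ⟨b, k, ⟨B.range_of_lt hkb, not_lt.1 hb, hkb⟩, (runTile_eq_of_run hxb).symm⟩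
  · rintro ⟨x, k, ⟨-, -, hk⟩, rfl⟩
    exact ⟨x, k, hk, rfl⟩

/-- Tiles are counted by their rightmost cells. -/
lemma card_runTiles (B : LabelBounds n d e) :
    (runTiles n h d e).card = ∑ x ∈ Icc (-(n : ℤ)) n, (d x - e x) := by
  rw [B.runTiles_eq_image_Ico, card_image_of_injOn, card_sigma]
  · simp only [Nat.card_Ico]
  · rintro ⟨x, k⟩ hx ⟨y, l⟩ hy hxy
    simp only [coe_sigma, Set.mem_sigma_iff, Finset.coe_Ico, Set.mem_Ico] at hx hy
    have hmem := B.self_mem_runTile (h := h) hx.2.2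
    rw [show runTile n h e x k = runTile n h e y l from hxy, B.mem_runTile hy.2.2] at hmem
    obtain ⟨hrun, hkl⟩ := hmem
    obtain rfl : k = l := by omega
    obtain hlt | rfl | hlt := lt_trichotomy x y
    · exact absurd (hrun x (by omega) (by omega)) (not_lt.2 hx.2.1)
    · rfl
    · exact absurd (hrun y (by omega) (by omega)) (not_lt.2 hy.2.1)

end LabelBounds

/-! ### The structure of cover-inclusive tilings -/

namespace IsDyckTile

variable {t : Finset (ℤ × ℤ)} {x y z w : ℤ}

lemma eq_of_mem (ht : IsDyckTile t) (hz : (x, z) ∈ t) (hw : (x, w) ∈ t) : z = w := by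
  obtain ⟨a, b, f, -, -, -, -, rfl⟩ := ht
  simp only [mem_image, Prod.mk.injEq] at hz hw
  obtain ⟨_, -, rfl, rfl⟩ := hz
  obtain ⟨_, -, rfl, rfl⟩ := hw
  rfl

lemma step_of_mem (ht : IsDyckTile t) (hxy : y = x + 1 ∨ x = y + 1) (hz : (x, z) ∈ t)
    (hw : (y, w) ∈ t) : w = z + 1 ∨ w = z - 1 := by
  obtain ⟨a, b, f, -, hf, -, -, rfl⟩ := ht
  simp only [mem_image, Finset.mem_Icc, Prod.mk.injEq] at hz hw
  obtain ⟨_, ⟨hax, hxb⟩, rfl, rfl⟩ := hz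
  obtain ⟨_, ⟨hay, hyb⟩, rfl, rfl⟩ := hw
  obtain rfl | rfl := hxy
  · exact hf _ hax (by omega)
  · have := hf _ hay (by omega)
    omega

end IsDyckTile

namespace DyckTiling

variable {n : ℕ} (T : DyckTiling n)

/-- The label of a point of the lower path: the number of cells of the tiling in column `x`. -/
def depth (x : ℤ) : ℕ := pathGap T.lower T.upper x

/-- Some tile covers the cells in layer `k` on both sides of the step from `x` to `x + 1`. -/
def Linked (x : ℤ) (k : ℕ) : Prop :=
  ∃ t ∈ T.tiles, (x, T.lower.ht x + 2 * (k : ℤ)) ∈ t ∧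
    (x + 1, T.lower.ht (x + 1) + 2 * (k : ℤ)) ∈ t

/-- The label of a step of the lower path: the number of tiles crossing the step from `x` to
`x + 1`, encoded as the first layer in which no tile crosses it. -/
def links (x : ℤ) : ℕ := sInf {k | ¬ T.Linked x k}

lemma upper_ht (x : ℤ) : T.upper.ht x = T.lower.ht x + 2 * T.depth x :=
  ht_eq_add_pathGap T.below x

variable {T} {t u : Finset (ℤ × ℤ)} {x y z : ℤ} {k l : ℕ}

lemma range_of_lt_depth (hk : k < T.depth x) : -(n : ℤ) < x ∧ x < n :=
  range_of_pathGap_ne_zero (Nat.ne_zero_of_lt hk)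

lemma exists_layer (ht : t ∈ T.tiles) (h : (x, z) ∈ t) :
    ∃ k < T.depth x, z = T.lower.ht x + 2 * k := by
  rw [depth, ← mem_skewCells T.below, ← T.cover]
  exact mem_biUnion.2 ⟨t, ht, h⟩

lemma lt_depth_of_mem (ht : t ∈ T.tiles) (h : (x, T.lower.ht x + 2 * (k : ℤ)) ∈ t) :
    k < T.depth x := by
  obtain ⟨l, hl, hkl⟩ := exists_layer ht h
  omega

lemma exists_mem_of_lt_depth (hk : k < T.depth x) :
    ∃ t ∈ T.tiles, (x, T.lower.ht x + 2 * (k : ℤ)) ∈ t := by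
  have hcell := (mem_skewCells T.below).2 ⟨k, hk, rfl⟩
  rw [← T.cover] at hcell
  exact mem_biUnion.1 hcell

lemma eq_of_mem (ht : t ∈ T.tiles) (hu : u ∈ T.tiles) {c : ℤ × ℤ} (hct : c ∈ t) (hcu : c ∈ u) :
    t = u := by
  by_contra hne
  exact disjoint_left.1 (T.disj t ht u hu hne) hct hcu

lemma Linked.lt_depth (H : T.Linked x k) : k < T.depth x :=
  let ⟨_, ht, hx, _⟩ := H
  lt_depth_of_mem ht hx

lemma Linked.lt_depth_succ (H : T.Linked x k) : k < T.depth (x + 1) :=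
  let ⟨_, ht, _, hx⟩ := H
  lt_depth_of_mem ht hx

namespace CoverInclusive

lemma exists_mem_of_lt (hT : T.CoverInclusive) (ht : t ∈ T.tiles)
    (hx : (x, T.lower.ht x + 2 * (l : ℤ)) ∈ t) (hkl : k < l) :
    ∃ u ∈ T.tiles, (x, T.lower.ht x + 2 * (k : ℤ)) ∈ u ∧
      ∀ y z, (y, z) ∈ t → ∃ w, (y, w) ∈ u := by
  obtain ⟨u, hu, hxu⟩ := exists_mem_of_lt_depth (hkl.trans (lt_depth_of_mem ht hx))
  exact ⟨u, hu, hxu, fun y z hy => hT t ht u hu ⟨_, hx, _, hxu, rfl, by dsimp only; omega⟩ _ hy⟩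

/-- The tile `u` below the offending cell covers both columns, by cover-inclusiveness, so it
climbs a layer too, but from layer `k - 1`. -/
lemma not_mem_next_layer (hT : T.CoverInclusive) (ht : t ∈ T.tiles) (hxy : y = x + 1 ∨ x = y + 1)
    (hx : (x, T.lower.ht x + 2 * (k : ℤ)) ∈ t) :
    (y, T.lower.ht y + 2 * ((k + 1 : ℕ) : ℤ)) ∉ t := by
  induction k using Nat.strong_induction_on generalizing t with
  | _ k ih =>
    intro hy
    have hstep : T.lower.ht y = T.lower.ht x + 1 ∨ T.lower.ht y = T.lower.ht x - 1 := by
      have hx_range := range_of_lt_depth (lt_depth_of_mem ht hx)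
      have hy_range := range_of_lt_depth (lt_depth_of_mem ht hy)
      obtain rfl | rfl := hxy
      · exact T.lower.ht_succ (by omega) (by omega)
      · have := T.lower.ht_succ (x := y) (by omega) (by omega)
        omega
    obtain ⟨u, hu, hyu, hcover⟩ := hT.exists_mem_of_lt ht hy k.lt_succ_self
    obtain ⟨w, hw⟩ := hcover x _ hx
    obtain ⟨m, -, rfl⟩ := exists_layer hu hw
    have ht_step := (T.isDyck t ht).step_of_mem hxy hx hy
    have hu_step := (T.isDyck u hu).step_of_mem hxy hw hyu
    obtain rfl | hmk := eq_or_ne m k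
    · obtain rfl := eq_of_mem ht hu hx hw
      have := (T.isDyck t ht).eq_of_mem hy hyu
      omega
    · obtain rfl : k = m + 1 := by omega
      exact ih m m.lt_succ_self hu hw hyu

lemma layer_succ (hT : T.CoverInclusive) (ht : t ∈ T.tiles)
    (hx : (x, T.lower.ht x + 2 * (k : ℤ)) ∈ t) (hz : (x + 1, z) ∈ t) :
    z = T.lower.ht (x + 1) + 2 * k := by
  obtain ⟨l, -, rfl⟩ := exists_layer ht hz
  have hx_range := range_of_lt_depth (lt_depth_of_mem ht hx)
  have hpath := T.lower.ht_succ hx_range.1.le hx_range.2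
  have htile := (T.isDyck t ht).step_of_mem (.inl rfl) hx hz
  have hup : l ≠ k + 1 := by
    rintro rfl
    exact hT.not_mem_next_layer ht (.inl rfl) hx hz
  have hdown : k ≠ l + 1 := by
    rintro rfl
    exact hT.not_mem_next_layer ht (.inr rfl) hz hx
  omega

/-- A tile is a translate of a piece of the lower path. -/
lemma exists_interval (hT : T.CoverInclusive) (ht : t ∈ T.tiles) :
    ∃ (a b : ℤ) (k : ℕ), a ≤ b ∧ T.lower.ht b = T.lower.ht a ∧
      (∀ x, a ≤ x → x ≤ b → T.lower.ht a ≤ T.lower.ht x) ∧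
      ∀ x z, (x, z) ∈ t ↔ a ≤ x ∧ x ≤ b ∧ z = T.lower.ht x + 2 * k := by
  obtain ⟨a, b, f, hab, -, hend, hmin, htf⟩ := T.isDyck t ht
  have hmem : ∀ x, a ≤ x → x ≤ b → (x, f x) ∈ t := fun x hax hxb => by
    rw [htf]
    exact mem_image_of_mem _ (Finset.mem_Icc.2 ⟨hax, hxb⟩)
  obtain ⟨k, -, hfa⟩ := exists_layer ht (hmem a le_rfl hab)
  have hf : ∀ x, a ≤ x → x ≤ b → f x = T.lower.ht x + 2 * k := by
    intro x hax
    induction x, hax using Int.leInduction with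
    | base => exact fun _ => hfa
    | succ x hax ih =>
      intro hxb
      have hx := hmem x hax (by omega)
      rw [ih (by omega)] at hx
      exact hT.layer_succ ht hx (hmem (x + 1) (by omega) hxb)
  have hfb := hf b hab le_rfl
  refine ⟨a, b, k, hab, by omega, fun x hax hxb => ?_, fun x z => ?_⟩
  · have := hf x hax hxb
    have := hmin x hax hxb
    omega
  · simp only [htf, mem_image, Finset.mem_Icc, Prod.mk.injEq]
    constructor
    · rintro ⟨_, ⟨hax, hxb⟩, rfl, rfl⟩
      exact ⟨hax, hxb, hf _ hax hxb⟩
    · rintro ⟨hax, hxb, rfl⟩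
      exact ⟨x, ⟨hax, hxb⟩, rfl, hf x hax hxb⟩

lemma linked_of_mem (hT : T.CoverInclusive) (ht : t ∈ T.tiles)
    (hx : (x, T.lower.ht x + 2 * (k : ℤ)) ∈ t) (hz : (y, z) ∈ t) :
    z = T.lower.ht y + 2 * k ∧ ∀ m, min x y ≤ m → m < max x y → T.Linked m k := by
  obtain ⟨a, b, l, -, -, -, hmem⟩ := hT.exists_interval ht
  have hx_range := (hmem _ _).1 hx
  have hz_range := (hmem _ _).1 hz
  exact ⟨by omega, fun m _ _ => ⟨t, ht, (hmem _ _).2 (by omega), (hmem _ _).2 (by omega)⟩⟩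

lemma linked_of_succ (hT : T.CoverInclusive) (H : T.Linked x (k + 1)) : T.Linked x k := by
  obtain ⟨t, ht, hx, hx'⟩ := H
  obtain ⟨u, hu, hxu, hcover⟩ := hT.exists_mem_of_lt ht hx k.lt_succ_self
  obtain ⟨w, hw⟩ := hcover _ _ hx'
  exact (hT.linked_of_mem hu hxu hw).2 x (by omega) (by omega)

lemma lt_links_iff (hT : T.CoverInclusive) : k < T.links x ↔ T.Linked x k := by
  constructor
  · intro h
    simpa using Nat.notMem_of_lt_sInf h
  · intro h
    by_contra hle
    have hnot : ¬ T.Linked x (T.links x) :=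
      Nat.sInf_mem (s := {k | ¬ T.Linked x k}) ⟨T.depth x, fun H => lt_irrefl _ H.lt_depth⟩
    exact hnot (Nat.decreasingInduction' (fun j _ _ => hT.linked_of_succ) (not_lt.1 hle) h)

lemma labelBounds (hT : T.CoverInclusive) : LabelBounds n T.depth T.links where
  range _ hx := range_of_lt_depth (Nat.pos_of_ne_zero hx)
  le_left _ := le_of_forall_lt fun _ hk => (hT.lt_links_iff.1 hk).lt_depth
  le_right _ := le_of_forall_lt fun _ hk => (hT.lt_links_iff.1 hk).lt_depth_succ

lemma eq_runTile (hT : T.CoverInclusive) (ht : t ∈ T.tiles)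
    (hx : (x, T.lower.ht x + 2 * (k : ℤ)) ∈ t) :
    t = runTile n T.lower.ht T.links x k := by
  ext ⟨y, z⟩
  rw [hT.labelBounds.mem_runTile (lt_depth_of_mem ht hx)]
  constructor
  · intro hy
    obtain ⟨hz, hlinked⟩ := hT.linked_of_mem ht hx hy
    exact ⟨fun m hl hr => hT.lt_links_iff.2 (hlinked m hl hr), hz⟩
  · rintro ⟨hrun, rfl⟩
    obtain hxy | hxy := le_total x y
    · induction y, hxy using Int.leInduction with
      | base => exact hx
      | succ y hxy ih =>
        obtain ⟨u, hu, hy, hy'⟩ := hT.lt_links_iff.1 (hrun y (by omega) (by omega))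
        rwa [eq_of_mem ht hu (ih fun m _ _ => hrun m (by omega) (by omega)) hy]
    · induction y, hxy using Int.leInductionDown with
      | base => exact hx
      | pred y hxy ih =>
        obtain ⟨u, hu, hy, hy'⟩ := hT.lt_links_iff.1 (hrun (y - 1) (by omega) (by omega))
        rw [sub_add_cancel] at hy'
        rwa [eq_of_mem ht hu (ih fun m _ _ => hrun m (by omega) (by omega)) hy']

lemma tiles_eq (hT : T.CoverInclusive) : T.tiles = runTiles n T.lower.ht T.depth T.links := by
  ext t
  rw [hT.labelBounds.mem_runTiles]
  constructor
  · intro ht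
    obtain ⟨a, b, k, hab, -, -, hmem⟩ := hT.exists_interval ht
    have ha := (hmem a _).2 ⟨le_rfl, hab, rfl⟩
    exact ⟨a, k, lt_depth_of_mem ht ha, (hT.eq_runTile ht ha).symm⟩
  · rintro ⟨x, k, hk, rfl⟩
    obtain ⟨t, ht, hx⟩ := exists_mem_of_lt_depth hk
    rwa [← hT.eq_runTile ht hx]

lemma ext (hT : T.CoverInclusive) {T' : DyckTiling n} (hT' : T'.CoverInclusive)
    (hl : T.lower = T'.lower) (hd : T.depth = T'.depth) (he : T.links = T'.links) : T = T' := by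
  have hu : T.upper = T'.upper := DyckPath.ext_ht fun x => by
    rw [T.upper_ht, T'.upper_ht, hl, hd]
  have ht : T.tiles = T'.tiles := by rw [hT.tiles_eq, hT'.tiles_eq, hl, hd, he]
  cases T
  cases T'
  simp_all only

lemma area_add_numTiles (hT : T.CoverInclusive) :
    T.area + T.numTiles + ∑ x ∈ Icc (-(n : ℤ)) n, T.links x =
      2 * ∑ x ∈ Icc (-(n : ℤ)) n, T.depth x := by
  rw [area, card_skewCells T.below, numTiles, hT.tiles_eq, hT.labelBounds.card_runTiles, add_assoc,
    ← sum_add_distrib, two_mul]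
  congr 1
  exact sum_congr rfl fun x _ => Nat.sub_add_cancel (hT.labelBounds.le_left x)

/-- A tile whose lowest points are its ends and that crosses an end step of a chord must reach
the other end step too. -/
lemma linked_of_chord (hT : T.CoverInclusive) {f : ChordForest}
    (hf : f.Follows T.lower.ht (-n)) {p q : ℤ} (hpq : (p, q) ∈ f.chords (-n))
    (H : T.Linked p k ∨ T.Linked q k) {m : ℤ} (hpm : p ≤ m) (hmq : m ≤ q) : T.Linked m k := by
  obtain ⟨-, hdown, hclose, habove⟩ := hf.chord hpq
  obtain ⟨t, ht, hcross⟩ : ∃ t ∈ T.tiles,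
      ((p, T.lower.ht p + 2 * (k : ℤ)) ∈ t ∧ (p + 1, T.lower.ht (p + 1) + 2 * (k : ℤ)) ∈ t) ∨
      ((q, T.lower.ht q + 2 * (k : ℤ)) ∈ t ∧ (q + 1, T.lower.ht (q + 1) + 2 * (k : ℤ)) ∈ t) := by
    simpa only [Linked, ← exists_or, ← and_or_left] using H
  obtain ⟨a, b, l, -, heq, hmin, hmem⟩ := hT.exists_interval ht
  simp only [hmem] at hcross
  have hspan : a ≤ p ∧ q + 1 ≤ b := by
    by_contra! hspan
    obtain hcross | hcross := hcross
    · have := habove b (by omega) (by omega)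
      have := hmin p (by omega) (by omega)
      omega
    · have := habove a (by omega) (by omega)
      have := hmin (q + 1) (by omega) (by omega)
      omega
  exact ⟨t, ht, (hmem _ _).2 (by omega), (hmem _ _).2 (by omega)⟩

lemma compatible (hT : T.CoverInclusive) {f : ChordForest} (hf : f.Follows T.lower.ht (-n))
    (hn : f.finish (-n) = n) {p q : ℤ} (hpq : (p, q) ∈ f.chords (-n)) :
    ChordForest.Compatible T.depth T.links p q := by
  obtain ⟨hup, hdown, -, -⟩ := hf.chord hpq
  obtain ⟨hp, hlt, hq⟩ := ChordForest.chords_range hpq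
  have hupper_p := T.upper.ht_succ (x := p) (by omega) (by omega)
  have hupper_q := T.upper.ht_succ (x := q) (by omega) (by omega)
  simp only [upper_ht] at hupper_p hupper_q
  have hspan : ∀ m k, p ≤ m → m ≤ q → T.Linked p k ∨ T.Linked q k → T.Linked m k :=
    fun m k hpm hmq H => hT.linked_of_chord hf hpq H hpm hmq
  refine ⟨by omega, by omega, le_antisymm ?_ ?_, fun m hpm hmq => ?_, fun m hpm hmq => ?_⟩ <;>
    refine le_of_forall_lt fun k hk => ?_ <;> rw [hT.lt_links_iff] at hk
  · exact hT.lt_links_iff.2 (hspan p k le_rfl hlt.le (.inr hk))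
  · exact hT.lt_links_iff.2 (hspan q k hlt.le le_rfl (.inl hk))
  · exact hT.lt_links_iff.2 (hspan m k hpm hmq (.inl hk))
  · exact (hspan m k hpm.le hmq (.inl hk)).lt_depth

end CoverInclusive

end DyckTiling

/-! ### Tilings from labels -/

namespace LabelBounds

variable {n : ℕ} {h : ℤ → ℤ} {d e : ℤ → ℕ}

lemma disjoint_of_mem_runTiles (B : LabelBounds n d e) {t u : Finset (ℤ × ℤ)}
    (ht : t ∈ runTiles n h d e) (hu : u ∈ runTiles n h d e) (hne : t ≠ u) : Disjoint t u := by
  obtain ⟨x, k, hk, rfl⟩ := B.mem_runTiles.1 ht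
  obtain ⟨y, l, hl, rfl⟩ := B.mem_runTiles.1 hu
  rw [disjoint_left]
  rintro ⟨z, w⟩ hxz hyz
  obtain ⟨hrun_x, hwk⟩ := (B.mem_runTile hk).1 hxz
  obtain ⟨hrun_y, hwl⟩ := (B.mem_runTile hl).1 hyz
  obtain rfl : k = l := by omega
  exact hne (runTile_eq_of_run (hrun_x.trans hrun_y.symm))

lemma mem_biUnion_runTiles (B : LabelBounds n d e) {x z : ℤ} :
    (x, z) ∈ (runTiles n h d e).biUnion id ↔ ∃ k < d x, z = h x + 2 * k := by
  rw [mem_biUnion]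
  constructor
  · rintro ⟨t, ht, hxt⟩
    obtain ⟨y, k, hk, rfl⟩ := B.mem_runTiles.1 ht
    obtain ⟨hrun, hz⟩ := (B.mem_runTile hk).1 hxt
    exact ⟨k, B.lt_of_run hk hrun, hz⟩
  · rintro ⟨k, hk, rfl⟩
    exact ⟨_, B.mem_runTiles.2 ⟨x, k, hk, rfl⟩, B.self_mem_runTile hk⟩

variable {T : DyckTiling n}

lemma coverInclusive (B : LabelBounds n d e) (hT : T.tiles = runTiles n h d e) :
    T.CoverInclusive := by
  rintro t ht u hu ⟨⟨x, z⟩, hxt, ⟨x', w⟩, hxu, hxx', hwz⟩ ⟨y, v⟩ hy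
  obtain rfl : x = x' := hxx'
  dsimp only at hwz
  rw [hT] at ht hu
  obtain ⟨x₁, k, hk, rfl⟩ := B.mem_runTiles.1 ht
  obtain ⟨x₂, l, hl, rfl⟩ := B.mem_runTiles.1 hu
  obtain ⟨hrun_t, hz⟩ := (B.mem_runTile hk).1 hxt
  obtain ⟨hrun_u, hw⟩ := (B.mem_runTile hl).1 hxu
  obtain ⟨hrun_y, -⟩ := (B.mem_runTile hk).1 hy
  have hlk : l ≤ k := by omega
  exact ⟨_, (B.mem_runTile hl).2 ⟨hrun_u.trans ((hrun_t.symm.trans hrun_y).mono hlk), rfl⟩⟩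

lemma linked_iff (B : LabelBounds n d e) (hT : T.tiles = runTiles n T.lower.ht d e) {x : ℤ}
    {k : ℕ} : T.Linked x k ↔ k < e x := by
  rw [DyckTiling.Linked, hT]
  constructor
  · rintro ⟨t, ht, hx, hx'⟩
    obtain ⟨y, l, hl, rfl⟩ := B.mem_runTiles.1 ht
    obtain ⟨hrun, hkl⟩ := (B.mem_runTile hl).1 hx
    obtain ⟨hrun', -⟩ := (B.mem_runTile hl).1 hx'
    obtain rfl : k = l := by omega
    exact Run.succ_iff.1 (hrun.symm.trans hrun')
  · intro hk
    have hkd := hk.trans_le (B.le_left x)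
    exact ⟨_, B.mem_runTiles.2 ⟨x, k, hkd, rfl⟩, B.self_mem_runTile hkd,
      (B.mem_runTile hkd).2 ⟨Run.succ_iff.2 hk, rfl⟩⟩

lemma links_eq (B : LabelBounds n d e) (hT : T.tiles = runTiles n T.lower.ht d e) :
    T.links = e :=
  funext fun _ => eq_of_forall_lt_iff fun _ =>
    (B.coverInclusive hT).lt_links_iff.trans (B.linked_iff hT)

end LabelBounds

/-- The labels `d` of the points and `e` of the steps of a path with chord forest `f` are those of
a cover-inclusive tiling above the path. The definition is by the local conditions on labels. -/
structure IsLabeling (n : ℕ) (f : ChordForest) (d e : ℤ → ℕ) : Prop where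
  bounds : LabelBounds n d e
  compatible : ∀ p q, (p, q) ∈ f.chords (-n) → ChordForest.Compatible d e p q

namespace IsLabeling

open ChordForest

variable {n : ℕ} {lam : DyckPath n} {d e d' e' : ℤ → ℕ} {f : ChordForest} {c : Cfg f}

lemma of_tiling {T : DyckTiling n} (hT : T.CoverInclusive) (hf : f.Follows T.lower.ht (-n))
    (hn : f.finish (-n) = n) : IsLabeling n f T.depth T.links :=
  ⟨hT.labelBounds, fun _ _ => hT.compatible hf hn⟩

lemma of_compatible (hn : f.finish (-n) = n) (hd : ∀ x, d x ≠ 0 → -(n : ℤ) < x ∧ x < n)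
    (he : ∀ x, e x ≠ 0 → -(n : ℤ) ≤ x ∧ x < n)
    (H : ∀ p q, (p, q) ∈ f.chords (-n) → Compatible d e p q) : IsLabeling n f d e := by
  have hle : ∀ x, e x ≤ d x ∧ e x ≤ d (x + 1) := by
    intro x
    obtain hx | hx := eq_or_ne (e x) 0
    · simp [hx]
    · obtain ⟨p, q, hpq, hxpq⟩ := exists_chord (f := f)
        (mem_steps.2 ⟨(he x hx).1, (he x hx).2.trans_eq hn.symm⟩)
      have hlt := (chords_range hpq).2.1
      obtain ⟨hup, hdown, hstep, -, hpoint⟩ := H p q hpq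
      have := hpoint (p + 1) (by omega) (by omega)
      have := hpoint q hlt le_rfl
      obtain rfl | rfl := hxpq <;> omega
  exact ⟨⟨hd, fun x => (hle x).1, fun x => (hle x).2⟩, H⟩

lemma isDyckTile_runTile (L : IsLabeling n f d e) (hf : f.Follows lam.ht (-n))
    (hn : f.finish (-n) = n) {x : ℤ} {k : ℕ} (hk : k < d x) :
    IsDyckTile (runTile n lam.ht e x k) := by
  obtain ⟨a, b, hea, heb, hrun⟩ := L.bounds.exists_interval hk
  have hx := (hrun x).1 (Run.refl x)
  have hab := hx.1.trans hx.2
  have ha := L.bounds.range_of_lt (L.bounds.lt_of_run hk ((hrun a).2 ⟨le_rfl, hab⟩))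
  have hb := L.bounds.range_of_lt (L.bounds.lt_of_run hk ((hrun b).2 ⟨hab, le_rfl⟩))
  have hlt : ∀ m, a ≤ m → m < b → k < e m := fun m ham hmb =>
    Run.succ_iff.1 (((hrun m).2 ⟨ham, hmb.le⟩).symm.trans ((hrun (m + 1)).2 (by omega)))
  have hleft : ∀ y, a ≤ y → y ≤ b → lam.ht a ≤ lam.ht y := fun y =>
    hf.left_le_apply ha.1 (hb.2.trans_eq hn.symm) fun p q hpq haq hqb => by
      by_contra! hpa
      have hkp := (L.compatible p q hpq).step_eq ▸ hlt q haq hqb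
      exact hea (hkp.trans_le ((L.compatible p q hpq).le_step _ (by omega) (by omega)))
  have hright : ∀ y, a ≤ y → y ≤ b → lam.ht b ≤ lam.ht y := fun y =>
    hf.right_le_apply ha.1 (hb.2.trans_eq hn.symm) fun p q hpq hap hpb => by
      by_contra! hbq
      exact heb ((hlt p hap hpb).trans_le
        ((L.compatible p q hpq).le_step _ (by omega) (by omega)))
  have hba := hright a le_rfl hab
  have hab' := hleft b hab le_rfl
  refine ⟨a, b, fun y => lam.ht y + 2 * k, hab, fun y hay hyb => ?_, by dsimp only; omega,
    fun y hay hyb => by have := hleft y hay hyb; dsimp only; omega, ?_⟩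
  · have := lam.ht_succ (x := y) (by omega) (by omega)
    dsimp only
    omega
  · ext ⟨y, z⟩
    simp only [L.bounds.mem_runTile hk, hrun, mem_image, Finset.mem_Icc, Prod.mk.injEq]
    exact ⟨fun ⟨hy, hz⟩ => ⟨y, hy, rfl, hz.symm⟩, by rintro ⟨_, hy, rfl, rfl⟩; exact ⟨hy, rfl⟩⟩

lemma exists_upper (L : IsLabeling n f d e) (hf : f.Follows lam.ht (-n))
    (hn : f.finish (-n) = n) : ∃ mu : DyckPath n, ∀ x, mu.ht x = lam.ht x + 2 * d x := by
  have hzero : ∀ x, x ≤ -(n : ℤ) ∨ (n : ℤ) ≤ x → d x = 0 := fun x hx => by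
    by_contra hdx
    have := L.bounds.range x hdx
    omega
  refine DyckPath.exists_ht_eq (fun x hx => by simp [hzero x (.inl hx), lam.ht_of_le hx])
    (fun x hx => by simp [hzero x (.inr hx), lam.ht_of_ge hx])
    (fun x => by have := lam.ht_nonneg x; omega) fun x hl hr => ?_
  obtain ⟨p, q, hpq, hx⟩ := exists_chord (f := f) (mem_steps.2 ⟨hl, hr.trans_eq hn.symm⟩)
  obtain ⟨hup, hdown, -⟩ := hf.chord hpq
  have hd_up := (L.compatible p q hpq).up
  have hd_down := (L.compatible p q hpq).down
  obtain rfl | rfl := hx <;> omega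

lemma exists_tiling (L : IsLabeling n f d e) (hf : f.Follows lam.ht (-n))
    (hn : f.finish (-n) = n) :
    ∃ T : DyckTiling n, T.CoverInclusive ∧ T.lower = lam ∧ T.depth = d ∧ T.links = e := by
  obtain ⟨mu, hmu⟩ := L.exists_upper hf hn
  have hle : ∀ x, lam.ht x ≤ mu.ht x := fun x => by rw [hmu x]; omega
  have hgap : pathGap lam mu = d := funext fun x => by rw [pathGap, hmu x]; omega
  let T : DyckTiling n :=
    { lower := lam
      upper := mu
      below := hle
      tiles := runTiles n lam.ht d e
      isDyck := fun t ht => by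
        obtain ⟨x, k, hk, rfl⟩ := L.bounds.mem_runTiles.1 ht
        exact L.isDyckTile_runTile hf hn hk
      disj := fun t ht u hu => L.bounds.disjoint_of_mem_runTiles ht hu
      cover := by
        ext ⟨x, z⟩
        rw [L.bounds.mem_biUnion_runTiles, mem_skewCells hle, hgap] }
  exact ⟨T, L.bounds.coverInclusive (T := T) rfl, rfl, hgap, L.bounds.links_eq (T := T) rfl⟩

lemma exists_cfg (L : IsLabeling n f d e) (hn : f.finish (-n) = n) :
    ∃ c ∈ (cfgs f 0).filter fun c => last c = 0, Records d e c (-n) 0 := by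
  obtain ⟨c, hc, H⟩ := ChordForest.exists_cfg L.compatible (fun _ _ => Nat.zero_le _)
    (fun _ _ => Nat.zero_le _)
  have hleft : d (-n) = 0 := by
    by_contra h
    exact lt_irrefl _ (L.bounds.range _ h).1
  have hright : d n = 0 := by
    by_contra h
    exact lt_irrefl _ (L.bounds.range _ h).2
  have hfirst := H.first_eq
  have hlast := H.last_eq
  rw [hn] at hlast
  exact ⟨c, mem_filter.2 ⟨mem_cfgs.2 ⟨hc, by omega⟩, by omega⟩, H⟩

lemma exists_of_cfg (hn : f.finish (-n) = n) (hc : c ∈ (cfgs f 0).filter fun c => last c = 0) :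
    ∃ d e, IsLabeling n f d e ∧ Records d e c (-n) 0 := by
  obtain ⟨hc, hlast⟩ := mem_filter.1 hc
  obtain ⟨hvalid, hfirst⟩ := mem_cfgs.1 hc
  obtain ⟨d, e, H⟩ := exists_records c (-n) 0
  have hleft := H.first_eq
  have hright := H.last_eq
  rw [hn] at hright
  have H' : Records (fun x => if x ∈ f.points (-n) then d x else 0)
      (fun x => if x ∈ f.steps (-n) then e x else 0) c (-n) 0 :=
    H.congr (fun _ hx => if_pos hx) (fun _ hx => if_pos hx)
  refine ⟨_, _, of_compatible hn (fun x hx => ?_) (fun x hx => ?_)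
    (fun p q => H'.compatible hvalid), H'⟩
  · rw [Ne, ite_eq_right_iff, Classical.not_imp, mem_points, hn] at hx
    obtain ⟨⟨hl, hr⟩, hdx⟩ := hx
    refine ⟨lt_of_le_of_ne hl ?_, lt_of_le_of_ne hr ?_⟩
    · rintro rfl
      omega
    · rintro rfl
      omega
  · rw [Ne, ite_eq_right_iff, Classical.not_imp, mem_steps, hn] at hx
    exact hx.1

lemma eq_of_records (L : IsLabeling n f d e) (L' : IsLabeling n f d' e')
    (hn : f.finish (-n) = n) (H : Records d e c (-n) 0) (H' : Records d' e' c (-n) 0) :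
    d = d' ∧ e = e' := by
  obtain ⟨hd, he⟩ := H.labels_unique H'
  simp only [mem_points, mem_steps, hn] at hd he
  constructor
  · funext x
    by_contra hne
    have hx : d x ≠ 0 ∨ d' x ≠ 0 := by omega
    have := hx.elim (L.bounds.range x) (L'.bounds.range x)
    exact hne (hd x ⟨this.1.le, this.2.le⟩)
  · funext x
    by_contra hne
    have := L.bounds.le_left x
    have := L'.bounds.le_left x
    have hx : d x ≠ 0 ∨ d' x ≠ 0 := by omega
    have := hx.elim (L.bounds.range x) (L'.bounds.range x)
    exact hne (he x ⟨this.1.le, this.2⟩)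

end IsLabeling

namespace DyckTiling.CoverInclusive

open ChordForest

variable {n : ℕ} {f : ChordForest}

lemma art_eq_weight {T : DyckTiling n} (hT : T.CoverInclusive) (hn : f.finish (-n) = n)
    {c : Cfg f} (H : Records T.depth T.links c (-n) 0) : T.art = weight c := by
  have hpoints : f.points (-n) = Icc (-(n : ℤ)) n := by rw [points, hn]
  have hsteps : ∑ x ∈ f.steps (-n), T.links x = ∑ x ∈ Icc (-(n : ℤ)) n, T.links x := by
    rw [steps, hn]
    refine sum_subset Ico_subset_Icc_self fun x hx hx' => ?_
    by_contra hlinks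
    have hdepth := (Nat.pos_of_ne_zero hlinks).trans_le (hT.labelBounds.le_left x)
    have := range_of_lt_depth hdepth
    simp only [Finset.mem_Icc, Finset.mem_Ico] at hx hx'
    omega
  have hrec := H.two_mul_sum
  have harea := hT.area_add_numTiles
  rw [hpoints, hsteps] at hrec
  rw [art]
  omega

end DyckTiling.CoverInclusive

open ChordForest in
lemma finsum_art_eq_sum_cfgs {n : ℕ} {lam : DyckPath n} {f : ChordForest}
    (hf : f.Follows lam.ht (-n)) (hn : f.finish (-n) = n) :
    ∑ᶠ T : {T : DyckTiling n // T.CoverInclusive ∧ T.lower = lam}, (X : ℤ[X]) ^ T.1.art =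
      ∑ c ∈ cfgs f 0 with last c = 0, X ^ weight c := by
  have hlabel : ∀ T : {T : DyckTiling n // T.CoverInclusive ∧ T.lower = lam},
      IsLabeling n f T.1.depth T.1.links := fun ⟨T, hT, hlower⟩ =>
    .of_tiling hT (hlower ▸ hf) hn
  choose F hmem hrec using fun T => (hlabel T).exists_cfg hn
  have hbij : Function.Bijective fun T => (⟨F T, hmem T⟩ : {c // c ∈ _}) := by
    constructor
    · intro T T' hTT'
      have hF : F T = F T' := congrArg Subtype.val hTT'
      obtain ⟨hd, he⟩ := (hlabel T).eq_of_records (hlabel T') hn (hrec T) (hF ▸ hrec T')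
      exact Subtype.ext (T.2.1.ext T'.2.1 (T.2.2.trans T'.2.2.symm) hd he)
    · rintro ⟨c, hc⟩
      obtain ⟨d, e, L, H⟩ := IsLabeling.exists_of_cfg hn hc
      obtain ⟨T, hT, hlower, rfl, rfl⟩ := L.exists_tiling hf hn
      exact ⟨⟨T, hT, hlower⟩, Subtype.ext ((hrec ⟨T, hT, hlower⟩).cfg_unique H)⟩
  rw [finsum_eq_of_bijective (g := fun c : {c // c ∈ _} => (X : ℤ[X]) ^ weight c.1) _ hbij
    fun T => by rw [T.2.1.art_eq_weight hn (hrec T)], finsum_eq_sum_of_fintype,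
    sum_coe_sort _ fun c => (X : ℤ[X]) ^ weight c]

/-! ### Natural labelings of the chord poset -/

namespace IsChord

variable {n : ℕ} {P : DyckPath n} {p q p' q' : ℕ}

lemma ht_end (h : IsChord P p q) : P.ht (q - n + 1) = P.ht (p - n) := by
  obtain ⟨-, -, -, -, hend, -⟩ := h
  rw [DyckPath.pt, DyckPath.pt, Nat.cast_succ, add_sub_right_comm] at hend
  exact hend

lemma ht_lt (h : IsChord P p q) {x : ℤ} (hp : p - n < x) (hq : x ≤ q - n) :
    P.ht (p - n) < P.ht x := by
  obtain ⟨-, -, -, -, -, hlt⟩ := h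
  have hx := hlt (x + n).toNat (by omega) (by omega)
  rwa [DyckPath.pt, DyckPath.pt, Int.toNat_of_nonneg (by omega), add_sub_cancel_right] at hx

lemma right_lt_right (h : IsChord P p q) (h' : IsChord P p' q') (hp : p < p') (hq : p' ≤ q) :
    q' < q := by
  by_contra! hqq'
  have hlt := h.ht_lt (x := p' - n) (by omega) (by omega)
  have hend := h.ht_end
  obtain rfl | hne := eq_or_ne q q'
  · have hend' := h'.ht_end
    omega
  · have hlt' := h'.ht_lt (x := q - n + 1) (by omega) (by omega)
    omega

end IsChord

namespace ChordLabeling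

variable {n : ℕ} {P : DyckPath n} (C : ChordLabeling P)

/-- The chord with label `i` as a pair of steps, each named by the column in which it starts. -/
def placed (i : Fin n) : ℤ × ℤ := (C.l i - n, C.r i - n)

lemma placed_injective : Function.Injective C.placed := fun i j hij => by
  have hl : (C.l i : ℤ) - n = C.l j - n := congrArg Prod.fst hij
  exact C.inj (by omega)

lemma placed_eq {f : ChordForest} (hf : f.Follows P.ht (-n)) {p q : ℤ}
    (hpq : (p, q) ∈ f.chords (-n)) {i : Fin n} (hp : (C.l i : ℤ) - n = p) :
    C.placed i = (p, q) := by
  obtain ⟨-, -, hend, hlt⟩ := hf.chord hpq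
  have hrange := ChordForest.chords_range hpq
  have hlr := (C.chord i).1
  have hend' := (C.chord i).ht_end
  subst hp
  refine Prod.ext rfl ?_
  obtain hq | hq | hq := lt_trichotomy ((C.r i : ℤ) - n) q
  · have := hlt (C.r i - n + 1) (by omega) (by omega)
    omega
  · exact hq
  · have := (C.chord i).ht_lt (x := q + 1) (by omega) (by omega)
    omega

lemma placed_mem_chords {f : ChordForest} (hf : f.Follows P.ht (-n)) (hn : f.finish (-n) = n)
    (i : Fin n) : C.placed i ∈ f.chords (-n) := by
  obtain ⟨hl, hup⟩ := (C.chord i).2.2.1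
  have hstep := P.ht_step ⟨C.l i, hl⟩
  simp only [if_pos hup] at hstep
  obtain ⟨p, q, hpq, hp | hq⟩ := ChordForest.exists_chord (f := f) (o := -n) (x := C.l i - n)
    (ChordForest.mem_steps.2 ⟨by omega, by omega⟩)
  · rwa [C.placed_eq hf hpq hp]
  · have hdown := (hf.chord hpq).2.1
    rw [← hq] at hdown
    omega

lemma image_l : univ.image C.l = ({m | P.step m = true} : Finset (Fin (2 * n))).image Fin.val := by
  refine eq_of_subset_of_card_le (fun m hm => ?_) ?_
  · obtain ⟨i, -, rfl⟩ := mem_image.1 hm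
    obtain ⟨hl, hup⟩ := (C.chord i).2.2.1
    exact mem_image.2 ⟨⟨C.l i, hl⟩, by simpa using hup, rfl⟩
  · rw [card_image_of_injective _ C.inj, card_image_of_injective _ Fin.val_injective, P.balanced,
      card_univ, Fintype.card_fin]

lemma exists_l_eq {m : Fin (2 * n)} (hm : P.step m = true) : ∃ i, C.l i = m := by
  have hmem : (m : ℕ) ∈ univ.image C.l := C.image_l ▸ mem_image_of_mem _ (by simpa using hm)
  simpa using hmem

lemma image_placed {f : ChordForest} (hf : f.Follows P.ht (-n)) (hn : f.finish (-n) = n) :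
    univ.image C.placed = f.chords (-n) := by
  refine subset_antisymm (fun c hc => ?_) fun ⟨p, q⟩ hpq => ?_
  · obtain ⟨i, -, rfl⟩ := mem_image.1 hc
    exact C.placed_mem_chords hf hn i
  · have hrange := ChordForest.chords_range hpq
    have hp : (((p + n).toNat : ℕ) : ℤ) - n = p := by omega
    have hstep := P.ht_step ⟨(p + n).toNat, by omega⟩
    simp only [hp, (hf.chord hpq).1] at hstep
    obtain ⟨i, hi⟩ := C.exists_l_eq (m := ⟨(p + n).toNat, by omega⟩) (by
      by_contra hdown
      rw [if_neg hdown] at hstep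
      omega)
    exact mem_image.2 ⟨i, mem_univ i, C.placed_eq hf hpq (by rw [hi]; exact hp)⟩

lemma two_mul_chordLen (i : Fin n) : 2 * (chordLen C i : ℤ) = C.r i - C.l i + 1 := by
  have hcount := stepSum_eq_add_two_mul_card P.step (a := C.l i) (b := C.r i + 1)
    (by have := (C.chord i).1; omega) (C.chord i).2.1
  have hend := (C.chord i).ht_end
  rw [P.ht_eq_stepSum, P.ht_eq_stepSum, add_right_comm, sub_add_cancel, sub_add_cancel] at hend
  simp only [Nat.lt_succ_iff] at hcount
  rw [chordLen]
  push_cast at hcount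
  linarith

lemma hookProd_eq {f : ChordForest} (hf : f.Follows P.ht (-n)) (hn : f.finish (-n) = n) :
    f.hookProd = ∏ i, qint (chordLen C i) := by
  rw [f.hookProd_eq_prod_chords (-n), ← C.image_placed hf hn,
    prod_image C.placed_injective.injOn]
  refine prod_congr rfl fun i _ => congrArg qint ?_
  have := C.two_mul_chordLen i
  simp only [placed]
  omega

lemma chordLen_eq_card_add_one (i : Fin n) :
    chordLen C i = #{j | C.l i < C.l j ∧ C.r j < C.r i} + 1 := by
  rw [chordLen, ← card_insert_of_notMem (a := i) (by simp),
    ← card_image_of_injective _ Fin.val_injective, ← card_image_of_injective _ C.inj]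
  congr 1
  ext m
  simp only [mem_image, mem_filter_univ, mem_insert]
  constructor
  · rintro ⟨m, ⟨hl, hr, hup⟩, rfl⟩
    obtain ⟨j, hj⟩ := C.exists_l_eq hup
    rw [← hj] at hl hr
    obtain hl | hl := hl.eq_or_lt
    · exact ⟨j, .inl (C.inj hl.symm), hj⟩
    · exact ⟨j, .inr ⟨hl, (C.chord i).right_lt_right (C.chord j) hl hr⟩, hj⟩
  · rintro ⟨j, hj, rfl⟩
    obtain ⟨hlt, hup⟩ := (C.chord j).2.2.1
    have hlr := (C.chord j).1
    refine ⟨⟨C.l j, hlt⟩, ?_, rfl⟩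
    obtain rfl | hj := hj
    · exact ⟨le_rfl, hlr.le, hup⟩
    · exact ⟨hj.1.le, (hlr.trans hj.2).le, hup⟩

theorem prod_qint_chordLen_mul_finsum_art :
    (∏ i, qint (chordLen C i)) * ∑ᶠ T : {T : DyckTiling n // T.CoverInclusive ∧ T.lower = P},
      (X : ℤ[X]) ^ T.1.art = qfact n := by
  obtain ⟨f, hf, hn⟩ := P.exists_forest
  have hsize : f.size = n := by
    rw [ChordForest.finish] at hn
    omega
  rw [← C.hookProd_eq hf hn, finsum_art_eq_sum_cfgs hf hn, f.hookProd_mul_sum_cfgs, hsize]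

end ChordLabeling

/-- If two Dyck paths of order `n` have isomorphic chord posets, then
their cover-inclusive Dyck tilings have the same generating function by the art
statistic. -/
theorem art_generating_function_poset_invariant (n : ℕ) (lam1 lam2 : DyckPath n)
    (h : ∃ (C1 : ChordLabeling lam1) (C2 : ChordLabeling lam2),
      ∀ i j : Fin n, (C1.l j < C1.l i ∧ C1.r i < C1.r j) ↔
        (C2.l j < C2.l i ∧ C2.r i < C2.r j)) :
    ∑ᶠ T : {T : DyckTiling n // T.CoverInclusive ∧ T.lower = lam1},
        (Polynomial.X : Polynomial ℤ) ^ T.1.art =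
      ∑ᶠ T : {T : DyckTiling n // T.CoverInclusive ∧ T.lower = lam2},
        (Polynomial.X : Polynomial ℤ) ^ T.1.art := by
  obtain ⟨C1, C2, hC⟩ := h
  have hlen : ∀ i, chordLen C1 i = chordLen C2 i := fun i => by
    simp only [ChordLabeling.chordLen_eq_card_add_one, hC]
  have hne : ∏ i, qint (chordLen C1 i) ≠ 0 := prod_ne_zero_iff.2 fun i _ =>
    qint_ne_zero (by rw [C1.chordLen_eq_card_add_one]; exact Nat.succ_ne_zero _)
  refine mul_left_cancel₀ hne ?_
  rw [C1.prod_qint_chordLen_mul_finsum_art]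
  simp only [hlen]
  rw [C2.prod_qint_chordLen_mul_finsum_art]

end
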